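/- arXiv:2102.04290 — 4 statements merged into one kernel-verified Lean document; each statement's English description precedes it below -/
import Mathlib

section
/- Let U ⊆ H be open, let (A∅, φ∅, a∅₃) be a data set on U satisfying the Kapustin–Witten equations (i), (ii), (iii), and let g : U → SL(2,ℂ) be smooth. Define a data set (A, φ, a₃) on U by: (A − A∅)_t − i(a₃ − a∅₃) = −(∇_{A∅t}g)g^{−1} + i[a∅₃, g]g^{−1}; (A − A∅)₁ + i(A − A∅)₂ = −((∇_{A∅1} + i∇_{A∅2})g)g^{−1}; φ = g φ∅ g^{−1}. Then (A, φ, a₃) also satisfies the Kapustin–Witten equations (i), (ii), (iii) at every point of U. -/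
open MeasureTheory Matrix Filter Set
open scoped ENNReal NNReal Topology

noncomputable section

attribute [local instance] Matrix.normedAddCommGroup Matrix.normedSpace

/-- Points of `(0,∞) × ℝ²` live in `ℝ × ℝ × ℝ` with coordinates `(t, z₁, z₂)`. -/
abbrev P3 := ℝ × ℝ × ℝ

/-- 2×2 complex matrices. -/
abbrev M2 := Matrix (Fin 2) (Fin 2) ℂ

/-- The open half-space `H = (0,∞) × ℝ²`. -/
def Hsp : Set P3 := {p | 0 < p.1}

/-- The half-space minus the locus `z = 0`. -/
def Hstar : Set P3 := {p | 0 < p.1 ∧ p.2 ≠ 0}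

/-- The coordinate directions. -/
def et : P3 := (1, 0, 0)
def ez1 : P3 := (0, 1, 0)
def ez2 : P3 := (0, 0, 1)

/-- Commutator of matrices. -/
def mcomm (X Y : M2) : M2 := X * Y - Y * X

/-- `η* = -η†`, minus the conjugate transpose. -/
def mstar (X : M2) : M2 := -Xᴴ

/-- The norm `|M| = ((1/2) trace (M M†))^{1/2}`. -/
noncomputable def mnorm (X : M2) : ℝ := Real.sqrt ((Matrix.trace (X * Xᴴ)).re / 2)

/-- `⟨στ⟩ = -(1/2) trace (στ)`. -/
noncomputable def minner (X Y : M2) : ℂ := -(2:ℂ)⁻¹ * Matrix.trace (X * Y)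

/-- The real inner product of su(2)-valued matrices. -/
noncomputable def ipR (X Y : M2) : ℝ := (minner X Y).re

/-- Membership in su(2): traceless and anti-Hermitian. -/
def IsSU2 (X : M2) : Prop := Matrix.trace X = 0 ∧ Xᴴ = -X

/-- `|z|` for a point of the half-space. -/
noncomputable def znorm (p : P3) : ℝ := Real.sqrt (p.2.1^2 + p.2.2^2)

/-- `z = z₁ + i z₂` as a complex number. -/
noncomputable def zc (p : P3) : ℂ := (p.2.1 : ℂ) + Complex.I * (p.2.2 : ℂ)

/-- Euclidean distance on `ℝ³`. -/
noncomputable def dist3 (p q : P3) : ℝ :=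
  Real.sqrt ((p.1 - q.1)^2 + (p.2.1 - q.2.1)^2 + (p.2.2 - q.2.2)^2)

/-- Directional derivative of a matrix-valued function. -/
noncomputable def pd (v : P3) (f : P3 → M2) (p : P3) : M2 := fderiv ℝ f p v

/-- Directional derivative of a real-valued function. -/
noncomputable def pdR (v : P3) (f : P3 → ℝ) (p : P3) : ℝ := fderiv ℝ f p v

/-- The flat Laplacian `∂_t² + ∂_{z₁}² + ∂_{z₂}²` on real functions. -/
noncomputable def lap3 (f : P3 → ℝ) (p : P3) : ℝ :=
  pdR et (fun q => pdR et f q) p + pdR ez1 (fun q => pdR ez1 f q) p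
    + pdR ez2 (fun q => pdR ez2 f q) p

/-- Covariant derivative `∇_A f = ∂_v f + [A, f]` in direction `v`. -/
noncomputable def cd (A : P3 → M2) (v : P3) (f : P3 → M2) : P3 → M2 :=
  fun p => pd v f p + mcomm (A p) (f p)

/-- `a₁ = (1/2)(φ + φ*)`. -/
noncomputable def a1Of (phi : P3 → M2) (p : P3) : M2 := (2:ℂ)⁻¹ • (phi p + mstar (phi p))

/-- `a₂ = (i/2)(φ - φ*)`. -/
noncomputable def a2Of (phi : P3 → M2) (p : P3) : M2 :=
  (Complex.I * (2:ℂ)⁻¹) • (phi p - mstar (phi p))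

/-- Curvature component `E_{A_1} = ∂_t A₁ - ∂_{z₁} A_t + [A_t, A₁]`. -/
noncomputable def EA1Of (At A1 : P3 → M2) (p : P3) : M2 :=
  pd et A1 p - pd ez1 At p + mcomm (At p) (A1 p)

/-- Curvature component `E_{A_2} = ∂_t A₂ - ∂_{z₂} A_t + [A_t, A₂]`. -/
noncomputable def EA2Of (At A2 : P3 → M2) (p : P3) : M2 :=
  pd et A2 p - pd ez2 At p + mcomm (At p) (A2 p)

/-- Curvature component `B_{A_3} = ∂_{z₁} A₂ - ∂_{z₂} A₁ + [A₁, A₂]`. -/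
noncomputable def B3Of (A1 A2 : P3 → M2) (p : P3) : M2 :=
  pd ez1 A2 p - pd ez2 A1 p + mcomm (A1 p) (A2 p)

/-- `𝔛 = ∇_{A_t} a₃ - B_{A_3} - (i/2)[φ, φ*]`. -/
noncomputable def XOf (At A1 A2 a3 phi : P3 → M2) (p : P3) : M2 :=
  cd At et a3 p - B3Of A1 A2 p - (Complex.I * (2:ℂ)⁻¹) • mcomm (phi p) (mstar (phi p))

/-- The Kapustin-Witten equations (i), (ii), (iii) at a point. -/
def KW123At (At A1 A2 a3 phi : P3 → M2) (p : P3) : Prop :=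
  EA1Of At A1 p = cd A2 ez2 a3 p ∧
  EA2Of At A2 p = -(cd A1 ez1 a3 p) ∧
  cd A1 ez1 phi p + Complex.I • cd A2 ez2 phi p = 0 ∧
  cd At et phi p = Complex.I • mcomm (a3 p) (phi p)

/-- The Kapustin-Witten equation (iv) at a point. -/
def KW4At (At A1 A2 a3 phi : P3 → M2) (p : P3) : Prop :=
  cd At et a3 p = B3Of A1 A2 p + (Complex.I * (2:ℂ)⁻¹) • mcomm (phi p) (mstar (phi p))

/-- The operator `Δ_{(A,a)} u = -(∇²_t + ∇²₁ + ∇²₂) u + Σ_a [a_a, [u, a_a]]`. -/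
noncomputable def lapOf (At A1 A2 a3 phi u : P3 → M2) (p : P3) : M2 :=
  -(cd At et (cd At et u) p + cd A1 ez1 (cd A1 ez1 u) p + cd A2 ez2 (cd A2 ez2 u) p)
  + mcomm (a1Of phi p) (mcomm (u p) (a1Of phi p))
  + mcomm (a2Of phi p) (mcomm (u p) (a2Of phi p))
  + mcomm (a3 p) (mcomm (u p) (a3 p))

/-- An ℝ-invariant data set on an open set `U ⊆ H`: smooth su(2)-valued connection
components `A_t, A₁, A₂`, an su(2)-valued `a₃` and an sl(2,ℂ)-valued `φ`. -/
structure DataSet (U : Set P3) where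
  At : P3 → M2
  A1 : P3 → M2
  A2 : P3 → M2
  a3 : P3 → M2
  phi : P3 → M2
  smooth_At : ContDiffOn ℝ (⊤:ℕ∞) At U
  smooth_A1 : ContDiffOn ℝ (⊤:ℕ∞) A1 U
  smooth_A2 : ContDiffOn ℝ (⊤:ℕ∞) A2 U
  smooth_a3 : ContDiffOn ℝ (⊤:ℕ∞) a3 U
  smooth_phi : ContDiffOn ℝ (⊤:ℕ∞) phi U
  su2_At : ∀ p ∈ U, IsSU2 (At p)
  su2_A1 : ∀ p ∈ U, IsSU2 (A1 p)
  su2_A2 : ∀ p ∈ U, IsSU2 (A2 p)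
  su2_a3 : ∀ p ∈ U, IsSU2 (a3 p)
  sl2_phi : ∀ p ∈ U, Matrix.trace (phi p) = 0

namespace DataSet

variable {U : Set P3} (D : DataSet U)

noncomputable def a1 : P3 → M2 := a1Of D.phi
noncomputable def a2 : P3 → M2 := a2Of D.phi
noncomputable def X : P3 → M2 := XOf D.At D.A1 D.A2 D.a3 D.phi
noncomputable def lap (u : P3 → M2) : P3 → M2 := lapOf D.At D.A1 D.A2 D.a3 D.phi u

end DataSet

/-- The Kapustin-Witten equations (i)-(iii) on `U`. -/
def KW123 (U : Set P3) (D : DataSet U) : Prop :=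
  ∀ p ∈ U, KW123At D.At D.A1 D.A2 D.a3 D.phi p

/-- The Kapustin-Witten equation (iv) on `U`. -/
def KW4 (U : Set P3) (D : DataSet U) : Prop :=
  ∀ p ∈ U, KW4At D.At D.A1 D.A2 D.a3 D.phi p

/-- `|∇_A f|² = Σ_{i ∈ {t,1,2}} |∇_{A_i} f|²`. -/
noncomputable def covGradSqOf (At A1 A2 : P3 → M2) (f : P3 → M2) (p : P3) : ℝ :=
  (mnorm (cd At et f p))^2 + (mnorm (cd A1 ez1 f p))^2 + (mnorm (cd A2 ez2 f p))^2

/-- `|B_{A_3}|² + |E_{A_1}|² + |E_{A_2}|²`. -/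
noncomputable def curvSqOf (At A1 A2 : P3 → M2) (p : P3) : ℝ :=
  (mnorm (B3Of A1 A2 p))^2 + (mnorm (EA1Of At A1 p))^2 + (mnorm (EA2Of At A2 p))^2

/-- `|a| = (|a₁|² + |a₂|² + |a₃|²)^{1/2}`. -/
noncomputable def anormOf (a1 a2 a3 : P3 → M2) (p : P3) : ℝ :=
  Real.sqrt ((mnorm (a1 p))^2 + (mnorm (a2 p))^2 + (mnorm (a3 p))^2)

/-- `σ₁ = i·(first Pauli matrix)` and its siblings: a basis of su(2) with
`σ_a² = -𝕀`, `σ₁σ₂ = -σ₃`, `σ₂σ₃ = -σ₁`, `σ₃σ₁ = -σ₂`. -/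
def s1 : M2 := !![0, Complex.I; Complex.I, 0]
def s2 : M2 := !![0, 1; -1, 0]
def s3 : M2 := !![Complex.I, 0; 0, -Complex.I]

/-- `Θ = arcsinh(t/|z|)`. -/
noncomputable def Th (p : P3) : ℝ := Real.arsinh (p.1 / znorm p)

/-- The function `α_m`. -/
noncomputable def alphaM (m : ℕ) (p : P3) : ℝ :=
  -(1/(2*p.1)) * (((m:ℝ)+1) * Real.sinh (Th p) / Real.sinh (((m:ℝ)+1) * Th p))
    * (Real.cosh (((m:ℝ)+1) * Th p) / Real.cosh (Th p))

/-- The function `f_m`. -/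
noncomputable def fM (m : ℕ) (p : P3) : ℝ :=
  1 - (Real.sinh (Th p) * Real.cosh (((m:ℝ)+1) * Th p))
      / (Real.cosh (Th p) * Real.sinh (((m:ℝ)+1) * Th p))

/-- Model data: `A_t^{(m)} = 0`. -/
noncomputable def modelAt (_m : ℕ) : P3 → M2 := fun _ => 0

/-- Model data: `A₁^{(m)}`. -/
noncomputable def modelA1 (m : ℕ) (p : P3) : M2 :=
  ((-((((m:ℝ)+1))/2) * fM m p * (p.2.2 / (znorm p)^2) : ℝ) : ℂ) • s3

/-- Model data: `A₂^{(m)}`. -/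
noncomputable def modelA2 (m : ℕ) (p : P3) : M2 :=
  ((((((m:ℝ)+1))/2) * fM m p * (p.2.1 / (znorm p)^2) : ℝ) : ℂ) • s3

/-- Model data: `a₃^{(m)} = α_m σ₃`. -/
noncomputable def modela3 (m : ℕ) (p : P3) : M2 := ((alphaM m p : ℝ) : ℂ) • s3

/-- Model data: `φ^{(m)}`. -/
noncomputable def modelPhi (m : ℕ) (p : P3) : M2 :=
  (-(((2*p.1 : ℝ) : ℂ))⁻¹
    * (((((m:ℝ)+1) * Real.sinh (Th p) / Real.sinh (((m:ℝ)+1) * Th p)) : ℝ) : ℂ)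
    * (zc p / ((znorm p : ℝ) : ℂ))^m) • (s1 - Complex.I • s2)

/-- A smooth SU(2)-valued map on `U`. -/
def SU2Map (h : P3 → M2) (U : Set P3) : Prop :=
  ContDiffOn ℝ (⊤:ℕ∞) h U ∧ ∀ p ∈ U, (h p)ᴴ * h p = 1 ∧ (h p).det = 1

/-- Gauge action on a connection component: `A ↦ h A h⁻¹ - (∂_v h) h⁻¹`. -/
noncomputable def gAct (h : P3 → M2) (v : P3) (A : P3 → M2) (p : P3) : M2 :=
  h p * A p * (h p)⁻¹ - pd v h p * (h p)⁻¹

/-- Pointwise norm of the difference between the `h`-gauge transform of a data set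
and the model data set labelled by `m` (summing all six components). -/
noncomputable def gaugeDiff (h : P3 → M2) {U : Set P3} (D : DataSet U) (m : ℕ) (p : P3) : ℝ :=
  mnorm (gAct h et D.At p - modelAt m p) + mnorm (gAct h ez1 D.A1 p - modelA1 m p)
  + mnorm (gAct h ez2 D.A2 p - modelA2 m p)
  + mnorm (h p * D.a1 p * (h p)⁻¹ - a1Of (modelPhi m) p)
  + mnorm (h p * D.a2 p * (h p)⁻¹ - a2Of (modelPhi m) p)
  + mnorm (h p * D.a3 p * (h p)⁻¹ - modela3 m p)

/-- The asymptotic description (1.10) for the pair `(m, np)`:  gauge-asymptotic to the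
model `m + 2np` as `t → 0`, to the model `m` as `t → ∞` (with convergence of
`ln(|φ|/|φ^{(m)}|)`), and to the model `0` as `|z|/t → ∞` (via an `SU(2)/{±1}`-valued
gauge transformation, encoded by local smooth lifts). -/
def Described110 (D : DataSet Hsp) (m np : ℕ) : Prop :=
  ∃ g0 gi : P3 → M2, ∃ dgt : P3 → ℝ,
    SU2Map g0 (Hsp ∩ {q | q.1 < 1}) ∧
    SU2Map gi (Hsp ∩ {q | 1 < q.1}) ∧
    (∀ ε > (0:ℝ), ∃ δ : ℝ, 0 < δ ∧ δ ≤ 1 ∧ ∀ q ∈ Hsp, q.1 < δ →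
        q.1 * gaugeDiff g0 D (m + 2*np) q < ε) ∧
    (∀ ε > (0:ℝ), ∃ K : ℝ, 1 ≤ K ∧ ∀ q ∈ Hsp, K < q.1 →
        q.1 * gaugeDiff gi D m q
          + |Real.log (mnorm (D.phi q) / mnorm (modelPhi m q))| < ε) ∧
    (∀ q ∈ Hsp, q.1 < znorm q →
        ∃ V : Set P3, IsOpen V ∧ q ∈ V ∧ ∃ h : P3 → M2, SU2Map h (V ∩ Hsp) ∧
          ∀ q' ∈ V ∩ Hsp, q'.1 < znorm q' → dgt q' = gaugeDiff h D 0 q') ∧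
    (∀ ε > (0:ℝ), ∃ K : ℝ, 0 < K ∧ ∀ q ∈ Hsp, K * q.1 < znorm q → q.1 * dgt q < ε)

/-- Gauge equivalence of two data sets on `H` by a smooth SU(2)-valued map. -/
def GaugeEquiv (D D' : DataSet Hsp) : Prop :=
  ∃ h : P3 → M2, SU2Map h Hsp ∧ ∀ p ∈ Hsp,
    D'.At p = gAct h et D.At p ∧ D'.A1 p = gAct h ez1 D.A1 p ∧
    D'.A2 p = gAct h ez2 D.A2 p ∧
    D'.phi p = h p * D.phi p * (h p)⁻¹ ∧ D'.a3 p = h p * D.a3 p * (h p)⁻¹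

/-- Condition (1.9). -/
def Obeys19 (D : DataSet Hsp) : Prop :=
  (∃ C : ℝ, ∀ p ∈ Hsp, p.1 * anormOf D.a1 D.a2 D.a3 p ≤ C) ∧
  (∃ t0 > (0:ℝ), ∃ ε > (0:ℝ), ∃ r > (0:ℝ), ∀ p ∈ Hsp,
      p.1 < t0 → r * p.1 ≤ znorm p → ε < p.1 * anormOf D.a1 D.a2 D.a3 p) ∧
  (∃ C > (0:ℝ), ∀ R > (0:ℝ),
      (∫⁻ p in Hsp ∩ {q | R < znorm q}, ENNReal.ofReal (curvSqOf D.At D.A1 D.A2 p))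
        ≤ ENNReal.ofReal (C / R))

/-- `|f| → 0` as `t → 0` and as `t → ∞` (uniformly in `z`) and as `t/|z| → 0`. -/
def UAsymp (f : P3 → M2) : Prop :=
  (∀ ε > (0:ℝ), ∃ δ > (0:ℝ), ∀ p ∈ Hsp, p.1 < δ → mnorm (f p) < ε) ∧
  (∀ ε > (0:ℝ), ∃ K : ℝ, ∀ p ∈ Hsp, K < p.1 → mnorm (f p) < ε) ∧
  (∀ ε > (0:ℝ), ∃ δ > (0:ℝ), ∀ p ∈ Hsp, p.1 < δ * znorm p → mnorm (f p) < ε)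

/-- The parameter domain `[0, T)` of a flow. -/
def flowDom (T : ℝ≥0∞) : Set ℝ := {s : ℝ | 0 ≤ s ∧ ENNReal.ofReal s < T}

/-- A flow for the base data set `D` on `[0, T)`:  a smooth family `s ↦ g|_s` of
`SL(2,ℂ)`-valued maps with `g|₀ ≡ 𝕀` such that `u|_s = -i(∂_s g)g⁻¹` is su(2)-valued,
the associated data sets `Ds s` are obtained from `g|_s` by the complex gauge action,
`Δ_{(A|_s,a|_s)} u|_s = 𝔛|_s`, and `|u|_s|` decays as `t → 0`, `t → ∞`, `t/|z| → 0`. -/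
structure KWFlow (D : DataSet Hsp) (T : ℝ≥0∞) where
  g : ℝ → P3 → M2
  Ds : ℝ → DataSet Hsp
  u : ℝ → P3 → M2
  smooth_g : ContDiffOn ℝ (⊤:ℕ∞) (fun q : ℝ × P3 => g q.1 q.2) (flowDom T ×ˢ Hsp)
  g_zero : ∀ p ∈ Hsp, g 0 p = 1
  det_g : ∀ s ∈ flowDom T, ∀ p ∈ Hsp, (g s p).det = 1
  u_def : ∀ s ∈ flowDom T, ∀ p ∈ Hsp,
    u s p = (-Complex.I) • (deriv (fun s' => g s' p) s * (g s p)⁻¹)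
  su2_u : ∀ s ∈ flowDom T, ∀ p ∈ Hsp, IsSU2 (u s p)
  eq_t : ∀ s ∈ flowDom T, ∀ p ∈ Hsp,
    ((Ds s).At p - D.At p) - Complex.I • ((Ds s).a3 p - D.a3 p)
      = -(cd D.At et (g s) p * (g s p)⁻¹) + Complex.I • (mcomm (D.a3 p) (g s p) * (g s p)⁻¹)
  eq_z : ∀ s ∈ flowDom T, ∀ p ∈ Hsp,
    ((Ds s).A1 p - D.A1 p) + Complex.I • ((Ds s).A2 p - D.A2 p)
      = -((cd D.A1 ez1 (g s) p + Complex.I • cd D.A2 ez2 (g s) p) * (g s p)⁻¹)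
  eq_phi : ∀ s ∈ flowDom T, ∀ p ∈ Hsp, (Ds s).phi p = g s p * D.phi p * (g s p)⁻¹
  lap_eq : ∀ s ∈ flowDom T, ∀ p ∈ Hsp, (Ds s).lap (u s) p = (Ds s).X p
  asymp_u : ∀ s ∈ flowDom T, UAsymp (u s)

/-- `|∇_{A} a|²`, summing over all three covariant derivatives of all of `a₁,a₂,a₃`. -/
noncomputable def covaNormSq {U : Set P3} (D : DataSet U) (p : P3) : ℝ :=
  covGradSqOf D.At D.A1 D.A2 D.a1 p + covGradSqOf D.At D.A1 D.A2 D.a2 p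
    + covGradSqOf D.At D.A1 D.A2 D.a3 p

/-- `|a|² = Σ_a |a_a|²`. -/
noncomputable def anormSq {U : Set P3} (D : DataSet U) (p : P3) : ℝ :=
  (mnorm (D.a1 p))^2 + (mnorm (D.a2 p))^2 + (mnorm (D.a3 p))^2

/-- The function `q ↦ μ_q`: the largest `μ ∈ (0, min(1/t_q, 1/100)]` such that
`μ² t_q² (|B| + |E₁| + |E₂| + |∇_A a| + |a|²) ≤ 1` on the ball of radius `t_q/4`
centered at `q`. -/
noncomputable def mu (D : DataSet Hsp) (q : P3) : ℝ :=
  sSup {μ : ℝ | 0 < μ ∧ μ ≤ min (1/q.1) (1/100) ∧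
    ∀ p, dist3 p q < q.1/4 →
      μ^2 * q.1^2 * (mnorm (B3Of D.A1 D.A2 p) + mnorm (EA1Of D.At D.A1 p)
        + mnorm (EA2Of D.At D.A2 p) + Real.sqrt (covaNormSq D p) + anormSq D p) ≤ 1}

/-- The Dirichlet Green's function of the half-space Laplacian with pole at `q`. -/
noncomputable def Gf (q p : P3) : ℝ :=
  (4*Real.pi)⁻¹ * (Real.sqrt ((p.1 - q.1)^2 + (p.2.1 - q.2.1)^2 + (p.2.2 - q.2.2)^2))⁻¹
  - (4*Real.pi)⁻¹ * (Real.sqrt ((p.1 + q.1)^2 + (p.2.1 - q.2.1)^2 + (p.2.2 - q.2.2)^2))⁻¹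

/-- A family `g : [0,T) → (maps on H)` extends smoothly to the closed interval `[0,T]`;
when `T = ∞` this is in the reparametrized sense `r = 1 - e^{-s}`. -/
def ExtendsToClosed (T : ℝ≥0∞) (g : ℝ → P3 → M2) : Prop :=
  (T ≠ ⊤ → ∃ G : ℝ → P3 → M2,
     ContDiffOn ℝ (⊤:ℕ∞) (fun q : ℝ × P3 => G q.1 q.2) (Set.Icc 0 T.toReal ×ˢ Hsp) ∧
     ∀ s ∈ Set.Ico (0:ℝ) T.toReal, ∀ p ∈ Hsp, G s p = g s p) ∧
  (T = ⊤ → ∃ G : ℝ → P3 → M2,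
     ContDiffOn ℝ (⊤:ℕ∞) (fun q : ℝ × P3 => G q.1 q.2) (Set.Icc (0:ℝ) 1 ×ˢ Hsp) ∧
     ∀ r ∈ Set.Ico (0:ℝ) 1, ∀ p ∈ Hsp, G r p = g (-Real.log (1 - r)) p)

/-- A family `g : [0,∞) → (maps on H)` extends smoothly (in the reparametrized sense
`r = 1 - e^{-s}`) to `s = ∞` with limit `gi`. -/
def ExtendsToLimit (g : ℝ → P3 → M2) (gi : P3 → M2) : Prop :=
  ∃ G : ℝ → P3 → M2,
    ContDiffOn ℝ (⊤:ℕ∞) (fun q : ℝ × P3 => G q.1 q.2) (Set.Icc (0:ℝ) 1 ×ˢ Hsp) ∧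
    (∀ r ∈ Set.Ico (0:ℝ) 1, ∀ p ∈ Hsp, G r p = g (-Real.log (1 - r)) p) ∧
    (∀ p ∈ Hsp, G 1 p = gi p)

/-- `∫_H (1+t²)|𝔛|²` for a data set on `H`. -/
noncomputable def XnormSqInt (D : DataSet Hsp) : ℝ≥0∞ :=
  ∫⁻ p in Hsp, ENNReal.ofReal ((1 + p.1^2) * (mnorm (D.X p))^2)

/-- Convergence in the C^∞ topology on an open set `Ω`: all iterated derivatives
converge uniformly on every compact subset of `Ω`. -/
def CinftyTendsTo (Ω : Set P3) (f : ℕ → P3 → M2) (g : P3 → M2) : Prop :=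
  ∀ K : Set P3, K ⊆ Ω → IsCompact K → ∀ n : ℕ,
    Filter.Tendsto
      (fun k => sSup ((fun p => ‖iteratedFDeriv ℝ n (fun q => f k q - g q) p‖) '' K))
      Filter.atTop (nhds (0:ℝ))

/-- The hypotheses of Proposition 6.1 for a base data set `D` with constants `M, t0`. -/
def Prop61Hyp (D : DataSet Hsp) (M t0 : ℝ) : Prop :=
  KW123 Hsp D ∧
  XnormSqInt D < ⊤ ∧
  (∃ m np : ℕ, 1 ≤ np ∧ Described110 D m np) ∧
  (∃ μ0 > (0:ℝ), ∀ q ∈ Hsp, μ0 ≤ mu D q) ∧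
  0 < M ∧
  (∀ R > (1:ℝ),
    (∫⁻ p in Hsp ∩ {q | R < znorm q},
        ENNReal.ofReal (curvSqOf D.At D.A1 D.A2 p)) ≤ ENNReal.ofReal (M/R) ∧
    (∫⁻ p in Hsp ∩ {q | R < znorm q},
        ENNReal.ofReal ((mnorm (D.X p))^2)) ≤ ENNReal.ofReal (M/R)) ∧
  (0 < t0 ∧ t0 ≤ 1) ∧
  (∃ C : ℝ, ∀ t ∈ Set.Ioc (0:ℝ) t0,
      (∫⁻ z : ℝ × ℝ, ENNReal.ofReal ((mnorm (D.X (t, z)))^2)) ≤ ENNReal.ofReal C) ∧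
  (∀ t ∈ Set.Ioc (0:ℝ) t0, ∀ R > (1:ℝ),
      (∫⁻ z in {z : ℝ × ℝ | R < Real.sqrt (z.1^2 + z.2^2)},
          ENNReal.ofReal ((mnorm (D.X (t, z)))^2)) ≤ ENNReal.ofReal (M/R))

/-!
The matrices `A_t - i a₃` and `A₁ + i A₂` are the components along `∂_t` and
`∂_{z₁} + i ∂_{z₂}` of an `SL(2,ℂ)`-connection. Equations (i) are the real and imaginary parts of
the vanishing of its curvature, and (ii), (iii) say that `φ` is covariantly constant in these two
directions.

The equations that define the transformed data say that `g`, viewed as a homomorphism from the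
bundle with the old connection to the bundle with the new one, is parallel and intertwines `φ` with
the new `φ`. The commutator of the two covariant derivatives of `g` is `F' g - g F`, so `g`
intertwines the curvatures; by the Leibniz rule it intertwines the covariant derivatives of `φ`.
Since `g` is invertible, the equations hold for one data set exactly when they hold for the other.
-/

section ComplexDirectionalDerivative

variable {E F : Type*} [NormedAddCommGroup E] [NormedSpace ℝ E] [NormedAddCommGroup F]
  [NormedSpace ℝ F]

lemma differentiableAt_fderiv_apply {f : E → F} {x : E} (hf : ContDiffAt ℝ 2 f x) (v : E) :
    DifferentiableAt ℝ (fun y => fderiv ℝ f y v) x :=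
  ((hf.fderiv_right (m := 1) (by norm_num)).differentiableAt one_ne_zero).clm_apply
    (differentiableAt_const v)

lemma fderiv_fderiv_apply_comm {f : E → F} {x : E} (hf : ContDiffAt ℝ 2 f x) (v w : E) :
    fderiv ℝ (fun y => fderiv ℝ f y w) x v = fderiv ℝ (fun y => fderiv ℝ f y v) x w := by
  have hd : DifferentiableAt ℝ (fderiv ℝ f) x :=
    (hf.fderiv_right (m := 1) (by norm_num)).differentiableAt one_ne_zero
  have second_fderiv (a b : E) :
      fderiv ℝ (fun y => fderiv ℝ f y b) x a = fderiv ℝ (fderiv ℝ f) x a b := by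
    simp [fderiv_clm_apply hd (differentiableAt_const b)]
  rw [second_fderiv, second_fderiv]
  exact hf.isSymmSndFDerivAt (by simp) v w

variable [Module ℂ F]

/-- The derivative of `f` along the complexified direction `v + i w`, encoded as the pair
`ξ = (v, w)` of real directions. -/
def complexDirDeriv (ξ : E × E) (f : E → F) (x : E) : F :=
  fderiv ℝ f x ξ.1 + Complex.I • fderiv ℝ f x ξ.2

variable {f g : E → F} {x : E}

lemma complexDirDeriv_congr (ξ : E × E) (h : f =ᶠ[𝓝 x] g) :
    complexDirDeriv ξ f x = complexDirDeriv ξ g x := by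
  simp only [complexDirDeriv, h.fderiv_eq]

lemma complexDirDeriv_add (ξ : E × E) (hf : DifferentiableAt ℝ f x) (hg : DifferentiableAt ℝ g x) :
    complexDirDeriv ξ (fun y => f y + g y) x
      = complexDirDeriv ξ f x + complexDirDeriv ξ g x := by
  simp only [complexDirDeriv, fderiv_fun_add hf hg, _root_.add_apply]
  module

lemma complexDirDeriv_sub (ξ : E × E) (hf : DifferentiableAt ℝ f x) (hg : DifferentiableAt ℝ g x) :
    complexDirDeriv ξ (fun y => f y - g y) x
      = complexDirDeriv ξ f x - complexDirDeriv ξ g x := by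
  simp only [complexDirDeriv, fderiv_fun_sub hf hg, _root_.sub_apply]
  module

variable [SMulCommClass ℝ ℂ F] [ContinuousConstSMul ℂ F]

lemma complexDirDeriv_const_smul (ξ : E × E) (c : ℂ) (hf : DifferentiableAt ℝ f x) :
    complexDirDeriv ξ (fun y => c • f y) x = c • complexDirDeriv ξ f x := by
  simp only [complexDirDeriv, fderiv_fun_const_smul hf, _root_.smul_apply]
  module

lemma differentiableAt_complexDirDeriv (ξ : E × E) (hf : ContDiffAt ℝ 2 f x) :
    DifferentiableAt ℝ (complexDirDeriv ξ f) x :=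
  (differentiableAt_fderiv_apply hf ξ.1).add
    ((differentiableAt_fderiv_apply hf ξ.2).const_smul Complex.I)

lemma complexDirDeriv_comm (ξ η : E × E) (hf : ContDiffAt ℝ 2 f x) :
    complexDirDeriv ξ (complexDirDeriv η f) x = complexDirDeriv η (complexDirDeriv ξ f) x := by
  have fderiv_complexDirDeriv (ζ : E × E) (v : E) : fderiv ℝ (complexDirDeriv ζ f) x v
      = fderiv ℝ (fun y => fderiv ℝ f y ζ.1) x v
        + Complex.I • fderiv ℝ (fun y => fderiv ℝ f y ζ.2) x v := by
    have h₁ := differentiableAt_fderiv_apply hf ζ.1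
    have h₂ := differentiableAt_fderiv_apply hf ζ.2
    unfold complexDirDeriv
    rw [fderiv_fun_add h₁ (h₂.fun_const_smul Complex.I), fderiv_fun_const_smul h₂]
    rfl
  rw [complexDirDeriv, complexDirDeriv]
  simp only [fderiv_complexDirDeriv, fderiv_fderiv_apply_comm hf η.1,
    fderiv_fderiv_apply_comm hf η.2]
  module

end ComplexDirectionalDerivative

section ProductRule

variable {E F G H : Type*} [NormedAddCommGroup E] [NormedSpace ℝ E]
  [NormedAddCommGroup F] [NormedSpace ℝ F] [NormedSpace ℂ F] [IsScalarTower ℝ ℂ F]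
  [NormedAddCommGroup G] [NormedSpace ℝ G] [NormedSpace ℂ G] [IsScalarTower ℝ ℂ G]
  [NormedAddCommGroup H] [NormedSpace ℝ H] [NormedSpace ℂ H] [IsScalarTower ℝ ℂ H]
  {x : E}

lemma complexDirDeriv_of_bilinear (B : F →L[ℂ] G →L[ℂ] H) (ξ : E × E) {f : E → F} {g : E → G}
    (hf : DifferentiableAt ℝ f x) (hg : DifferentiableAt ℝ g x) :
    complexDirDeriv ξ (fun y => B (f y) (g y)) x
      = B (complexDirDeriv ξ f x) (g x) + B (f x) (complexDirDeriv ξ g x) := by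
  have fderiv_apply (v : E) : fderiv ℝ (fun y => B (f y) (g y)) x v
      = B (f x) (fderiv ℝ g x v) + B (fderiv ℝ f x v) (g x) :=
    DFunLike.congr_fun ((B.bilinearRestrictScalars ℝ).fderiv_of_bilinear hf hg) v
  simp only [complexDirDeriv, fderiv_apply, map_add, map_smul, _root_.add_apply, _root_.smul_apply]
  module

/-- Matrix multiplication as a continuous bilinear map, for the product rule: rectangular matrices
do not form a normed algebra. -/
def matrixMulBilinear (l m n : Type*) [Fintype l] [Fintype m] [Fintype n] :
    Matrix l m ℂ →L[ℂ] Matrix m n ℂ →L[ℂ] Matrix l n ℂ :=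
  (mulLinearMap ℂ : Matrix l m ℂ →ₗ[ℂ] Matrix m n ℂ →ₗ[ℂ] Matrix l n ℂ).toContinuousBilinearMap

lemma differentiableAt_matrix_mul {l m n : Type*} [Finite l] [Fintype m] [Finite n]
    {f : E → Matrix l m ℂ} {g : E → Matrix m n ℂ}
    (hf : DifferentiableAt ℝ f x) (hg : DifferentiableAt ℝ g x) :
    DifferentiableAt ℝ (fun y => f y * g y) x := by
  cases nonempty_fintype l
  cases nonempty_fintype n
  exact (((matrixMulBilinear l m n).bilinearRestrictScalars ℝ).hasFDerivAt_of_bilinear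
    hf.hasFDerivAt hg.hasFDerivAt).differentiableAt

lemma complexDirDeriv_matrix_mul {l m n : Type*} [Fintype l] [Fintype m] [Fintype n] (ξ : E × E)
    {f : E → Matrix l m ℂ} {g : E → Matrix m n ℂ}
    (hf : DifferentiableAt ℝ f x) (hg : DifferentiableAt ℝ g x) :
    complexDirDeriv ξ (fun y => f y * g y) x
      = complexDirDeriv ξ f x * g x + f x * complexDirDeriv ξ g x :=
  complexDirDeriv_of_bilinear (matrixMulBilinear l m n) ξ hf hg

end ProductRule

section MatrixConnection

variable {E : Type*} [NormedAddCommGroup E] [NormedSpace ℝ E] {x : E}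
  {l m n : Type*} [Fintype l] [Fintype m] [Fintype n]

/-- The covariant derivative along `ξ` of a section `s` of the bundle of homomorphisms between two
trivial bundles, whose connections have `ξ`-components `a` (source) and `a'` (target). With `a = a'`
it is the covariant derivative `D_ξ s + [a, s]` of an endomorphism. -/
def homCovDeriv (ξ : E × E) (a' : E → Matrix m m ℂ) (a : E → Matrix n n ℂ)
    (s : E → Matrix m n ℂ) (x : E) : Matrix m n ℂ :=
  complexDirDeriv ξ s x + a' x * s x - s x * a x

/-- The curvature, evaluated on the constant complexified directions `ξ` and `η`, of a connection
with components `a` along `ξ` and `b` along `η`. -/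
def curvature (ξ η : E × E) (a b : E → Matrix n n ℂ) (x : E) : Matrix n n ℂ :=
  complexDirDeriv ξ b x - complexDirDeriv η a x + (a x * b x - b x * a x)

lemma homCovDeriv_congr (ξ : E × E) (a' : E → Matrix m m ℂ) (a : E → Matrix n n ℂ)
    {s t : E → Matrix m n ℂ} (h : s =ᶠ[𝓝 x] t) :
    homCovDeriv ξ a' a s x = homCovDeriv ξ a' a t x := by
  simp only [homCovDeriv, complexDirDeriv_congr ξ h, h.self_of_nhds]

lemma homCovDeriv_zero (ξ : E × E) (a' : E → Matrix m m ℂ) (a : E → Matrix n n ℂ) :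
    homCovDeriv ξ a' a 0 x = 0 := by
  simp [homCovDeriv, complexDirDeriv]

lemma homCovDeriv_mul (ξ : E × E) (a : E → Matrix l l ℂ) (b : E → Matrix m m ℂ)
    (c : E → Matrix n n ℂ) {f : E → Matrix l m ℂ} {g : E → Matrix m n ℂ}
    (hf : DifferentiableAt ℝ f x) (hg : DifferentiableAt ℝ g x) :
    homCovDeriv ξ a c (fun y => f y * g y) x
      = homCovDeriv ξ a b f x * g x + f x * homCovDeriv ξ b c g x := by
  simp only [homCovDeriv, complexDirDeriv_matrix_mul ξ hf hg, Matrix.add_mul, Matrix.sub_mul,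
    Matrix.mul_add, Matrix.mul_sub, Matrix.mul_assoc]
  abel

variable {g : E → Matrix m n ℂ} {a' b' : E → Matrix m m ℂ} {a b : E → Matrix n n ℂ}

lemma complexDirDeriv_homCovDeriv (ξ η : E × E) (hg : ContDiffAt ℝ 2 g x)
    (ha' : DifferentiableAt ℝ a' x) (ha : DifferentiableAt ℝ a x) :
    complexDirDeriv ξ (homCovDeriv η a' a g) x
      = complexDirDeriv ξ (complexDirDeriv η g) x
        + (complexDirDeriv ξ a' x * g x + a' x * complexDirDeriv ξ g x)
        - (complexDirDeriv ξ g x * a x + g x * complexDirDeriv ξ a x) := by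
  have dg : DifferentiableAt ℝ g x := hg.differentiableAt two_ne_zero
  have dDg := differentiableAt_complexDirDeriv η hg
  have da'g := differentiableAt_matrix_mul ha' dg
  have dga := differentiableAt_matrix_mul dg ha
  unfold homCovDeriv
  rw [complexDirDeriv_sub ξ (dDg.fun_add da'g) dga, complexDirDeriv_add ξ dDg da'g,
    complexDirDeriv_matrix_mul ξ ha' dg, complexDirDeriv_matrix_mul ξ dg ha]

lemma homCovDeriv_homCovDeriv_sub_comm (ξ η : E × E) (hg : ContDiffAt ℝ 2 g x)
    (ha' : DifferentiableAt ℝ a' x) (hb' : DifferentiableAt ℝ b' x)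
    (ha : DifferentiableAt ℝ a x) (hb : DifferentiableAt ℝ b x) :
    homCovDeriv ξ a' a (homCovDeriv η b' b g) x - homCovDeriv η b' b (homCovDeriv ξ a' a g) x
      = curvature ξ η a' b' x * g x - g x * curvature ξ η a b x := by
  rw [homCovDeriv.eq_def ξ, homCovDeriv.eq_def η b' b (homCovDeriv ξ a' a g),
    complexDirDeriv_homCovDeriv ξ η hg hb' hb, complexDirDeriv_homCovDeriv η ξ hg ha' ha,
    complexDirDeriv_comm η ξ hg]
  simp only [homCovDeriv, curvature, Matrix.mul_add, Matrix.mul_sub, Matrix.add_mul,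
    Matrix.sub_mul, Matrix.mul_assoc]
  abel

lemma curvature_mul_eq_mul_curvature (ξ η : E × E) (hg : ContDiffAt ℝ 2 g x)
    (ha' : DifferentiableAt ℝ a' x) (hb' : DifferentiableAt ℝ b' x)
    (ha : DifferentiableAt ℝ a x) (hb : DifferentiableAt ℝ b x)
    (hξ : homCovDeriv ξ a' a g =ᶠ[𝓝 x] 0) (hη : homCovDeriv η b' b g =ᶠ[𝓝 x] 0) :
    curvature ξ η a' b' x * g x = g x * curvature ξ η a b x := by
  rw [← sub_eq_zero, ← homCovDeriv_homCovDeriv_sub_comm ξ η hg ha' hb' ha hb,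
    homCovDeriv_congr ξ a' a hη, homCovDeriv_congr η b' b hξ, homCovDeriv_zero, homCovDeriv_zero,
    sub_zero]

lemma homCovDeriv_mul_eq_mul_homCovDeriv (ξ : E × E) {φ' : E → Matrix m m ℂ} {φ : E → Matrix n n ℂ}
    (hg : DifferentiableAt ℝ g x) (hφ' : DifferentiableAt ℝ φ' x) (hφ : DifferentiableAt ℝ φ x)
    (hξ : homCovDeriv ξ a' a g x = 0) (h : ∀ᶠ y in 𝓝 x, φ' y * g y = g y * φ y) :
    homCovDeriv ξ a' a' φ' x * g x = g x * homCovDeriv ξ a a φ x := by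
  simpa [homCovDeriv_mul ξ a' a' a hφ' hg, homCovDeriv_mul ξ a' a a hg hφ, hξ]
    using homCovDeriv_congr ξ a' a h

end MatrixConnection

lemma eq_zero_iff_of_mul_eq_mul {R : Type*} [MonoidWithZero R] {X Y u : R} (hu : IsUnit u)
    (h : X * u = u * Y) : X = 0 ↔ Y = 0 := by
  rw [← hu.mul_left_eq_zero, h, hu.mul_right_eq_zero]

lemma differentiableAt_of_contDiffOn {E F : Type*} [NormedAddCommGroup E] [NormedSpace ℝ E]
    [NormedAddCommGroup F] [NormedSpace ℝ F] {f : E → F} {s : Set E} {x : E}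
    (hf : ContDiffOn ℝ (⊤ : ℕ∞) f s) (hs : s ∈ 𝓝 x) : DifferentiableAt ℝ f x :=
  (hf.contDiffAt hs).differentiableAt (by simp)

section SkewAdjoint

lemma lie_mem_skewAdjoint {R : Type*} [Ring R] [StarRing R] {X Y : R}
    (hX : X ∈ skewAdjoint R) (hY : Y ∈ skewAdjoint R) : ⁅X, Y⁆ ∈ skewAdjoint R := by
  rw [skewAdjoint.mem_iff] at *
  simp [Ring.lie_def, hX, hY]

lemma fderiv_apply_mem_skewAdjoint {E F : Type*} [NormedAddCommGroup E] [NormedSpace ℝ E]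
    [NormedAddCommGroup F] [StarAddMonoid F] [NormedSpace ℝ F] [StarModule ℝ F] [ContinuousStar F]
    {f : E → F} {x : E} (hf : ∀ᶠ y in 𝓝 x, f y ∈ skewAdjoint F) (v : E) :
    fderiv ℝ f x v ∈ skewAdjoint F := by
  have star_f : (fun y => star (f y)) =ᶠ[𝓝 x] fun y => -f y :=
    hf.mono fun _ hy => skewAdjoint.mem_iff.1 hy
  have fderiv_star_f := star_f.fderiv_eq (𝕜 := ℝ)
  rw [fderiv_star, fderiv_fun_neg] at fderiv_star_f
  exact skewAdjoint.mem_iff.2 (congrArg (fun L : E →L[ℝ] F => L v) fderiv_star_f)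

lemma add_I_smul_eq_zero_iff {V : Type*} [AddCommGroup V] [Module ℂ V] [StarAddMonoid V]
    [StarModule ℂ V] {X Y : V} (hX : X ∈ skewAdjoint V) (hY : Y ∈ skewAdjoint V) :
    X + Complex.I • Y = 0 ↔ X = 0 ∧ Y = 0 := by
  refine ⟨fun h => ?_, fun ⟨hX0, hY0⟩ => by simp [hX0, hY0]⟩
  have h_star : -X + Complex.I • Y = 0 := by
    simpa [skewAdjoint.mem_iff.1 hX, skewAdjoint.mem_iff.1 hY] using congrArg star h
  have hX0 : X = 0 := by
    linear_combination (norm := module) (1 / 2 : ℂ) • h - (1 / 2 : ℂ) • h_star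
  exact ⟨hX0, by simpa [hX0] using h⟩

lemma IsSU2.mem_skewAdjoint {X : M2} (hX : IsSU2 X) : X ∈ skewAdjoint M2 :=
  skewAdjoint.mem_iff.2 hX.2

variable {A At A1 A2 f : P3 → M2} {p : P3}

lemma cd_mem_skewAdjoint (v : P3) (hA : A p ∈ skewAdjoint M2)
    (hf : ∀ᶠ q in 𝓝 p, f q ∈ skewAdjoint M2) : cd A v f p ∈ skewAdjoint M2 :=
  add_mem (fderiv_apply_mem_skewAdjoint hf v) (lie_mem_skewAdjoint hA hf.self_of_nhds)

lemma EA1Of_mem_skewAdjoint (hAt : ∀ᶠ q in 𝓝 p, At q ∈ skewAdjoint M2)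
    (hA1 : ∀ᶠ q in 𝓝 p, A1 q ∈ skewAdjoint M2) : EA1Of At A1 p ∈ skewAdjoint M2 :=
  add_mem (sub_mem (fderiv_apply_mem_skewAdjoint hA1 et) (fderiv_apply_mem_skewAdjoint hAt ez1))
    (lie_mem_skewAdjoint hAt.self_of_nhds hA1.self_of_nhds)

lemma EA2Of_mem_skewAdjoint (hAt : ∀ᶠ q in 𝓝 p, At q ∈ skewAdjoint M2)
    (hA2 : ∀ᶠ q in 𝓝 p, A2 q ∈ skewAdjoint M2) : EA2Of At A2 p ∈ skewAdjoint M2 :=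
  add_mem (sub_mem (fderiv_apply_mem_skewAdjoint hA2 et) (fderiv_apply_mem_skewAdjoint hAt ez2))
    (lie_mem_skewAdjoint hAt.self_of_nhds hA2.self_of_nhds)

end SkewAdjoint

/-- The real direction `∂_t`, as a complexified direction. -/
def dirT : P3 × P3 := (et, 0)

/-- The complexified direction `∂_{z₁} + i ∂_{z₂}`. -/
def dirZ : P3 × P3 := (ez1, ez2)

lemma complexDirDeriv_dirT (f : P3 → M2) (p : P3) : complexDirDeriv dirT f p = pd et f p := by
  rw [complexDirDeriv, dirT, map_zero, smul_zero, add_zero]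
  rfl

lemma complexDirDeriv_dirZ (f : P3 → M2) (p : P3) :
    complexDirDeriv dirZ f p = pd ez1 f p + Complex.I • pd ez2 f p :=
  rfl

namespace DataSet

variable {U : Set P3} {p : P3} (D D' : DataSet U)

/-- The component `A_t - i a₃` along `∂_t` of the complexified connection of a data set. -/
def connT (q : P3) : M2 := D.At q - Complex.I • D.a3 q

/-- The component `A₁ + i A₂` along `∂_{z₁} + i ∂_{z₂}` of the complexified connection of a data
set. -/
def connZ (q : P3) : M2 := D.A1 q + Complex.I • D.A2 q

lemma differentiableAt_connT (hU : U ∈ 𝓝 p) : DifferentiableAt ℝ D.connT p :=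
  (differentiableAt_of_contDiffOn D.smooth_At hU).sub
    ((differentiableAt_of_contDiffOn D.smooth_a3 hU).const_smul Complex.I)

lemma differentiableAt_connZ (hU : U ∈ 𝓝 p) : DifferentiableAt ℝ D.connZ p :=
  (differentiableAt_of_contDiffOn D.smooth_A1 hU).add
    ((differentiableAt_of_contDiffOn D.smooth_A2 hU).const_smul Complex.I)

lemma curvature_dirT_dirZ (hU : U ∈ 𝓝 p) :
    curvature dirT dirZ D.connT D.connZ p = (EA1Of D.At D.A1 p - cd D.A2 ez2 D.a3 p)
      + Complex.I • (EA2Of D.At D.A2 p + cd D.A1 ez1 D.a3 p) := by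
  have hAt := differentiableAt_of_contDiffOn D.smooth_At hU
  have hA1 := differentiableAt_of_contDiffOn D.smooth_A1 hU
  have hA2 := differentiableAt_of_contDiffOn D.smooth_A2 hU
  have ha3 := differentiableAt_of_contDiffOn D.smooth_a3 hU
  unfold curvature connT connZ
  rw [complexDirDeriv_add dirT hA1 (hA2.fun_const_smul Complex.I),
    complexDirDeriv_const_smul dirT Complex.I hA2,
    complexDirDeriv_sub dirZ hAt (ha3.fun_const_smul Complex.I),
    complexDirDeriv_const_smul dirZ Complex.I ha3]
  simp only [complexDirDeriv_dirT, complexDirDeriv_dirZ, EA1Of, EA2Of, cd, mcomm, mul_add, mul_sub,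
    add_mul, sub_mul, smul_mul_assoc, mul_smul_comm, smul_add, smul_sub, smul_smul,
    Complex.I_mul_I, neg_one_smul]
  module

lemma curvature_eq_zero_iff (hU : U ∈ 𝓝 p) :
    curvature dirT dirZ D.connT D.connZ p = 0 ↔
      EA1Of D.At D.A1 p = cd D.A2 ez2 D.a3 p ∧ EA2Of D.At D.A2 p = -cd D.A1 ez1 D.a3 p := by
  have eventually_skew {f : P3 → M2} (hf : ∀ q ∈ U, IsSU2 (f q)) :
      ∀ᶠ q in 𝓝 p, f q ∈ skewAdjoint M2 :=
    mem_of_superset hU fun q hq => (hf q hq).mem_skewAdjoint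
  have hAt := eventually_skew D.su2_At
  have hA1 := eventually_skew D.su2_A1
  have hA2 := eventually_skew D.su2_A2
  have ha3 := eventually_skew D.su2_a3
  rw [D.curvature_dirT_dirZ hU, add_I_smul_eq_zero_iff
    (sub_mem (EA1Of_mem_skewAdjoint hAt hA1) (cd_mem_skewAdjoint ez2 hA2.self_of_nhds ha3))
    (add_mem (EA2Of_mem_skewAdjoint hAt hA2) (cd_mem_skewAdjoint ez1 hA1.self_of_nhds ha3)),
    sub_eq_zero, eq_neg_iff_add_eq_zero]

lemma homCovDeriv_dirT_phi (q : P3) : homCovDeriv dirT D.connT D.connT D.phi q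
    = cd D.At et D.phi q - Complex.I • mcomm (D.a3 q) (D.phi q) := by
  simp only [homCovDeriv, complexDirDeriv_dirT, connT, cd, mcomm, sub_mul, mul_sub, smul_mul_assoc,
    mul_smul_comm]
  module

lemma homCovDeriv_dirZ_phi (q : P3) : homCovDeriv dirZ D.connZ D.connZ D.phi q
    = cd D.A1 ez1 D.phi q + Complex.I • cd D.A2 ez2 D.phi q := by
  simp only [homCovDeriv, complexDirDeriv_dirZ, connZ, cd, mcomm, add_mul, mul_add, smul_mul_assoc,
    mul_smul_comm]
  module

lemma kw123At_iff (hU : U ∈ 𝓝 p) :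
    KW123At D.At D.A1 D.A2 D.a3 D.phi p ↔
      curvature dirT dirZ D.connT D.connZ p = 0 ∧
      homCovDeriv dirZ D.connZ D.connZ D.phi p = 0 ∧
      homCovDeriv dirT D.connT D.connT D.phi p = 0 := by
  rw [KW123At, D.curvature_eq_zero_iff hU, D.homCovDeriv_dirZ_phi, D.homCovDeriv_dirT_phi,
    sub_eq_zero, and_assoc]

variable {D D'} {g : P3 → M2}

lemma homCovDeriv_dirT_eq_zero (hg : IsUnit (g p))
    (h : (D'.At p - D.At p) - Complex.I • (D'.a3 p - D.a3 p)
      = -(cd D.At et g p * (g p)⁻¹) + Complex.I • (mcomm (D.a3 p) (g p) * (g p)⁻¹)) :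
    homCovDeriv dirT D'.connT D.connT g p = 0 := by
  have h_mul := congrArg (· * g p) h
  simp only [add_mul, neg_mul, smul_mul_assoc, sub_mul, smul_sub, cd, mcomm,
    nonsing_inv_mul_cancel_right (g p) _ ((isUnit_iff_isUnit_det _).1 hg)] at h_mul
  simp only [homCovDeriv, complexDirDeriv_dirT, connT, sub_mul, mul_sub, smul_mul_assoc,
    mul_smul_comm]
  linear_combination (norm := module) h_mul

lemma homCovDeriv_dirZ_eq_zero (hg : IsUnit (g p))
    (h : (D'.A1 p - D.A1 p) + Complex.I • (D'.A2 p - D.A2 p)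
      = -((cd D.A1 ez1 g p + Complex.I • cd D.A2 ez2 g p) * (g p)⁻¹)) :
    homCovDeriv dirZ D'.connZ D.connZ g p = 0 := by
  have h_mul := congrArg (· * g p) h
  simp only [add_mul, neg_mul, smul_mul_assoc, sub_mul, cd, mcomm,
    nonsing_inv_mul_cancel_right (g p) _ ((isUnit_iff_isUnit_det _).1 hg)] at h_mul
  simp only [homCovDeriv, complexDirDeriv_dirZ, connZ, add_mul, mul_add, smul_mul_assoc,
    mul_smul_comm]
  linear_combination (norm := module) h_mul

end DataSet

theorem statement11_general (U : Set P3) (hU : IsOpen U) (D D' : DataSet U) (g : P3 → M2)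
    (hg : ContDiffOn ℝ 2 g U) (hunit : ∀ p ∈ U, IsUnit (g p))
    (heqt : ∀ p ∈ U, (D'.At p - D.At p) - Complex.I • (D'.a3 p - D.a3 p)
        = -(cd D.At et g p * (g p)⁻¹) + Complex.I • (mcomm (D.a3 p) (g p) * (g p)⁻¹))
    (heqz : ∀ p ∈ U, (D'.A1 p - D.A1 p) + Complex.I • (D'.A2 p - D.A2 p)
        = -((cd D.A1 ez1 g p + Complex.I • cd D.A2 ez2 g p) * (g p)⁻¹))
    (heqphi : ∀ p ∈ U, D'.phi p = g p * D.phi p * (g p)⁻¹) :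
    KW123 U D' ↔ KW123 U D := by
  refine forall₂_congr fun p hp => ?_
  have hUp : U ∈ 𝓝 p := hU.mem_nhds hp
  have hg2 : ContDiffAt ℝ 2 g p := hg.contDiffAt hUp
  have dg : DifferentiableAt ℝ g p := hg2.differentiableAt two_ne_zero
  have dφ (E : DataSet U) := differentiableAt_of_contDiffOn E.smooth_phi hUp
  have hT : homCovDeriv dirT D'.connT D.connT g =ᶠ[𝓝 p] 0 := mem_of_superset hUp
    fun q hq => DataSet.homCovDeriv_dirT_eq_zero (hunit q hq) (heqt q hq)
  have hZ : homCovDeriv dirZ D'.connZ D.connZ g =ᶠ[𝓝 p] 0 := mem_of_superset hUp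
    fun q hq => DataSet.homCovDeriv_dirZ_eq_zero (hunit q hq) (heqz q hq)
  have hφ : ∀ᶠ q in 𝓝 p, D'.phi q * g q = g q * D.phi q := mem_of_superset hUp fun q hq => by
    change D'.phi q * g q = g q * D.phi q
    rw [heqphi q hq, nonsing_inv_mul_cancel_right _ _ ((isUnit_iff_isUnit_det _).1 (hunit q hq))]
  rw [D'.kw123At_iff hUp, D.kw123At_iff hUp]
  exact and_congr
    (eq_zero_iff_of_mul_eq_mul (hunit p hp) <| curvature_mul_eq_mul_curvature dirT dirZ hg2
      (D'.differentiableAt_connT hUp) (D'.differentiableAt_connZ hUp)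
      (D.differentiableAt_connT hUp) (D.differentiableAt_connZ hUp) hT hZ)
    (and_congr
      (eq_zero_iff_of_mul_eq_mul (hunit p hp) <|
        homCovDeriv_mul_eq_mul_homCovDeriv dirZ dg (dφ D') (dφ D) hZ.self_of_nhds hφ)
      (eq_zero_iff_of_mul_eq_mul (hunit p hp) <|
        homCovDeriv_mul_eq_mul_homCovDeriv dirT dg (dφ D') (dφ D) hT.self_of_nhds hφ))

/-- The observation around (2.21) of the paper: the data set obtained from a solution
of the Kapustin-Witten equations (i)-(iii) by the complex gauge action of a smooth
`SL(2,ℂ)`-valued map again obeys (i)-(iii). -/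
theorem statement11 (U : Set P3) (hU : IsOpen U) (hUH : U ⊆ Hsp)
    (D D' : DataSet U) (g : P3 → M2)
    (hg : ContDiffOn ℝ (⊤:ℕ∞) g U) (hdet : ∀ p ∈ U, (g p).det = 1)
    (hKW : KW123 U D)
    (heqt : ∀ p ∈ U, (D'.At p - D.At p) - Complex.I • (D'.a3 p - D.a3 p)
        = -(cd D.At et g p * (g p)⁻¹) + Complex.I • (mcomm (D.a3 p) (g p) * (g p)⁻¹))
    (heqz : ∀ p ∈ U, (D'.A1 p - D.A1 p) + Complex.I • (D'.A2 p - D.A2 p)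
        = -((cd D.A1 ez1 g p + Complex.I • cd D.A2 ez2 g p) * (g p)⁻¹))
    (heqphi : ∀ p ∈ U, D'.phi p = g p * D.phi p * (g p)⁻¹) :
    KW123 U D' := by
  have hunit (p : P3) (hp : p ∈ U) : IsUnit (g p) := by
    simp [isUnit_iff_isUnit_det, hdet p hp]
  exact (statement11_general U hU D D' g (hg.of_le ENat.LEInfty.out) hunit
    heqt heqz heqphi).2 hKW

end
end

section
/- There exists c₀ > 0 such that for every q = (t_q, z_q) ∈ H, ∫_H (1 + t²)^{−1} G_q(t,z)² dt dz₁ dz₂ ≤ c₀ · min( t_q , (1 + |ln t_q|)/t_q ). -/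
open MeasureTheory Matrix Filter Set
open scoped ENNReal NNReal Topology

noncomputable section

attribute [local instance] Matrix.normedAddCommGroup Matrix.normedSpace

/-!
Write `d` and `e` for the distances from `p = (t, z)` to `q` and to its mirror image in `∂H`.
Since `e ^ 2 - d ^ 2 = 4 t t_q` and `e` is at least `t`, `t_q` and `d`, the method of images gives
`G_q(p) ^ 2 ≤ (t t_q / π) ^ 2 / (d ^ 2 e ^ 4)`, hence
`(1 + t ^ 2)⁻¹ G_q(p) ^ 2 ≤ C min(1, t_q ^ 2) d⁻² (t_q ^ 2 + d ^ 2)⁻¹`.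
Replacing `d` by the smaller `‖p - q‖` (the norm of `ℝ × ℝ × ℝ` is the sup norm) only increases
the right-hand side, which becomes radial about `q`; its integral over `ℝ³` is a multiple of
`min(1, t_q ^ 2) ∫₀^∞ (t_q ^ 2 + r ^ 2)⁻¹ dr`, that is, of `min(t_q, 1 / t_q)`.
-/

section Inequalities

variable {K : Type*} [Field K] [LinearOrder K] [IsStrictOrderedRing K]

lemma sq_inv_sub_inv_le {d e : K} (hd : 0 < d) (hde : d ≤ e) :
    (d⁻¹ - e⁻¹) ^ 2 ≤ (e ^ 2 - d ^ 2) ^ 2 / (d ^ 2 * e ^ 4) := by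
  have he : 0 < e := hd.trans_le hde
  have : 0 ≤ e - d := sub_nonneg.2 hde
  have hle : d⁻¹ - e⁻¹ ≤ (e ^ 2 - d ^ 2) / (d * e ^ 2) := by
    calc d⁻¹ - e⁻¹ = (e - d) * e / (d * e ^ 2) := by field_simp
      _ ≤ (e - d) * (e + d) / (d * e ^ 2) := by
        gcongr
        exact le_add_of_nonneg_right hd.le
      _ = (e ^ 2 - d ^ 2) / (d * e ^ 2) := by ring
  calc (d⁻¹ - e⁻¹) ^ 2 ≤ ((e ^ 2 - d ^ 2) / (d * e ^ 2)) ^ 2 :=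
        pow_le_pow_left₀ (sub_nonneg.2 (inv_anti₀ hd hde)) hle 2
    _ = (e ^ 2 - d ^ 2) ^ 2 / (d ^ 2 * e ^ 4) := by ring

lemma inv_one_add_sq_mul_sq_le_min {x y b : K} (hb : x ^ 2 + y ^ 2 ≤ b) :
    (1 + x ^ 2)⁻¹ * (x * y) ^ 2 ≤ min 1 (y ^ 2) * b := by
  have hxb : x ^ 2 ≤ b := (le_add_of_nonneg_right (sq_nonneg y)).trans hb
  have hyb : y ^ 2 ≤ b := (le_add_of_nonneg_left (sq_nonneg x)).trans hb
  have hb0 : 0 ≤ b := (sq_nonneg x).trans hxb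
  rw [min_mul_of_nonneg _ _ hb0, mul_pow]
  refine le_min ?_ ?_
  · rw [inv_mul_le_iff₀ (by positivity)]
    nlinarith [mul_le_mul_of_nonneg_left hyb (sq_nonneg x)]
  · calc (1 + x ^ 2)⁻¹ * (x ^ 2 * y ^ 2) ≤ 1 * (x ^ 2 * y ^ 2) := by
          gcongr
          exact inv_le_one_of_one_le₀ (le_add_of_nonneg_right (sq_nonneg x))
      _ = y ^ 2 * x ^ 2 := by ring
      _ ≤ y ^ 2 * b := by gcongr

end Inequalities

section RadialIntegral

lemma inv_sq_add_sq_eq_mul_inv_one_add_sq {K : Type*} [Field K] {τ : K} (hτ : τ ≠ 0) (y : K) :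
    (τ ^ 2 + y ^ 2)⁻¹ = (τ ^ 2)⁻¹ * (1 + (τ⁻¹ * y) ^ 2)⁻¹ := by
  rw [← mul_inv]
  congr 1
  field_simp

lemma integrable_inv_sq_add_sq {τ : ℝ} (hτ : τ ≠ 0) :
    Integrable fun y : ℝ => (τ ^ 2 + y ^ 2)⁻¹ := by
  simp only [inv_sq_add_sq_eq_mul_inv_one_add_sq hτ]
  exact (integrable_inv_one_add_sq.comp_mul_left' (inv_ne_zero hτ)).const_mul _

lemma integral_Ioi_zero_inv_sq_add_sq {τ : ℝ} (hτ : 0 < τ) :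
    ∫ y in Ioi (0 : ℝ), (τ ^ 2 + y ^ 2)⁻¹ = Real.pi / (2 * τ) := by
  simp only [inv_sq_add_sq_eq_mul_inv_one_add_sq hτ.ne']
  rw [integral_const_mul,
    integral_comp_mul_left_Ioi (fun y : ℝ => (1 + y ^ 2)⁻¹) 0 (inv_pos.2 hτ), mul_zero,
    integral_Ioi_inv_one_add_sq, Real.arctan_zero, sub_zero, inv_inv, smul_eq_mul]
  field_simp

variable {E : Type*} [NormedAddCommGroup E] [NormedSpace ℝ E] [FiniteDimensional ℝ E]
  [Nontrivial E] [MeasurableSpace E] [BorelSpace E] (μ : Measure E) [μ.IsAddHaarMeasure]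

lemma lintegral_inv_norm_pow_mul_inv_sq_add_norm_sq (c : E) {τ : ℝ} (hτ : 0 < τ) :
    ∫⁻ x, ENNReal.ofReal
        ((‖x - c‖ ^ (Module.finrank ℝ E - 1))⁻¹ * (τ ^ 2 + ‖x - c‖ ^ 2)⁻¹) ∂μ
      = ENNReal.ofReal
          (Module.finrank ℝ E * μ.real (Metric.ball 0 1) * (Real.pi / (2 * τ))) := by
  set f : ℝ → ℝ := fun y => (y ^ (Module.finrank ℝ E - 1))⁻¹ * (τ ^ 2 + y ^ 2)⁻¹
  have hjacobian : EqOn (fun y => y ^ (Module.finrank ℝ E - 1) • f y)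
      (fun y => (τ ^ 2 + y ^ 2)⁻¹) (Ioi 0) := fun y hy =>
    mul_inv_cancel_left₀ (pow_ne_zero _ (ne_of_gt hy)) _
  have hintegrable : Integrable (fun x => f ‖x‖) μ := (integrable_fun_norm_addHaar μ).2 <|
    (integrable_inv_sq_add_sq hτ.ne').integrableOn.congr_fun hjacobian.symm measurableSet_Ioi
  rw [lintegral_sub_right_eq_self (fun x => ENNReal.ofReal (f ‖x‖)) c,
    ← ofReal_integral_eq_lintegral_ofReal hintegrable (ae_of_all _ fun x => by positivity),
    integral_fun_norm_addHaar, setIntegral_congr_fun measurableSet_Ioi hjacobian,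
    integral_Ioi_zero_inv_sq_add_sq hτ, nsmul_eq_mul, smul_eq_mul, mul_assoc]

end RadialIntegral

section HalfSpaceGeometry

instance isAddHaarMeasure_volume_P3 : (volume : Measure P3).IsAddHaarMeasure :=
  Measure.prod.instIsAddHaarMeasure _ _

lemma volume_real_ball_P3 : (volume : Measure P3).real (Metric.ball 0 1) = 8 := by
  have hcube : Metric.ball (0 : P3) 1
      = Metric.ball (0 : ℝ) 1 ×ˢ Metric.ball (0 : ℝ) 1 ×ˢ Metric.ball (0 : ℝ) 1 := by
    simp only [ball_prod_same]
    rfl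
  rw [hcube, Measure.volume_eq_prod, measureReal_prod_prod, Measure.volume_eq_prod,
    measureReal_prod_prod, Real.volume_real_ball zero_le_one]
  norm_num

lemma lintegral_inv_norm_sq_mul_inv_sq_add_norm_sq_P3 (c : P3) {τ : ℝ} (hτ : 0 < τ) :
    ∫⁻ p : P3, ENNReal.ofReal ((‖p - c‖ ^ 2)⁻¹ * (τ ^ 2 + ‖p - c‖ ^ 2)⁻¹)
      = ENNReal.ofReal (12 * Real.pi / τ) := by
  have hdim : Module.finrank ℝ P3 = 3 := by simp
  have hradial := lintegral_inv_norm_pow_mul_inv_sq_add_norm_sq (volume : Measure P3) c hτ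
  simp only [hdim, volume_real_ball_P3, Nat.add_one_sub_one, Nat.cast_ofNat] at hradial
  rw [hradial]
  congr 1
  ring

lemma measurableSet_Hsp : MeasurableSet Hsp :=
  measurableSet_lt measurable_const measurable_fst

/-- The mirror image of `q` in the boundary plane `t = 0`, where the image charge of the Green's
function `Gf q` sits. -/
def mirror (q : P3) : P3 := (-q.1, q.2)

lemma dist3_sq (p q : P3) :
    dist3 p q ^ 2 = (p.1 - q.1) ^ 2 + (p.2.1 - q.2.1) ^ 2 + (p.2.2 - q.2.2) ^ 2 :=
  Real.sq_sqrt (by positivity)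

lemma norm_sub_le_dist3 (p q : P3) : ‖p - q‖ ≤ dist3 p q := by
  simp only [Prod.norm_def, Real.norm_eq_abs, max_le_iff]
  refine ⟨?_, ?_, ?_⟩ <;>
  · refine Real.abs_le_sqrt ?_
    simp only [Prod.fst_sub, Prod.snd_sub]
    linarith [sq_nonneg (p.1 - q.1), sq_nonneg (p.2.1 - q.2.1), sq_nonneg (p.2.2 - q.2.2)]

lemma dist3_mirror_sq (p q : P3) : dist3 p (mirror q) ^ 2 = dist3 p q ^ 2 + 4 * (p.1 * q.1) := by
  simp only [dist3_sq, mirror]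
  ring

lemma sq_add_sq_le_dist3_mirror_sq {p q : P3} (hpq : 0 ≤ p.1 * q.1) :
    p.1 ^ 2 + q.1 ^ 2 ≤ dist3 p (mirror q) ^ 2 := by
  simp only [dist3_sq, mirror]
  linarith [sq_nonneg (p.2.1 - q.2.1), sq_nonneg (p.2.2 - q.2.2),
    show (p.1 - -q.1) ^ 2 = p.1 ^ 2 + q.1 ^ 2 + 2 * (p.1 * q.1) by ring]

end HalfSpaceGeometry

section GreenFunction

lemma Gf_eq (q p : P3) :
    Gf q p = (4 * Real.pi)⁻¹ * ((dist3 p q)⁻¹ - (dist3 p (mirror q))⁻¹) := by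
  simp only [Gf, dist3, mirror, sub_neg_eq_add, mul_sub]

lemma Gf_sq_le {p q : P3} (hpq : 0 ≤ p.1 * q.1) (hne : p ≠ q) :
    Gf q p ^ 2
      ≤ (Real.pi ^ 2)⁻¹ * (p.1 * q.1) ^ 2 / (dist3 p q ^ 2 * dist3 p (mirror q) ^ 4) := by
  have hd : 0 < dist3 p q := (norm_sub_pos_iff.2 hne).trans_le (norm_sub_le_dist3 p q)
  have hde : dist3 p q ≤ dist3 p (mirror q) :=
    le_of_sq_le_sq (by linarith [dist3_mirror_sq p q]) (Real.sqrt_nonneg _)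
  calc Gf q p ^ 2
      = (4 * Real.pi)⁻¹ ^ 2 * ((dist3 p q)⁻¹ - (dist3 p (mirror q))⁻¹) ^ 2 := by
        rw [Gf_eq, mul_pow]
    _ ≤ (4 * Real.pi)⁻¹ ^ 2 * ((dist3 p (mirror q) ^ 2 - dist3 p q ^ 2) ^ 2
          / (dist3 p q ^ 2 * dist3 p (mirror q) ^ 4)) := by
        gcongr
        exact sq_inv_sub_inv_le hd hde
    _ = _ := by
        rw [dist3_mirror_sq, add_sub_cancel_left]
        ring

lemma weighted_Gf_sq_le {p q : P3} (hpq : 0 ≤ p.1 * q.1) (hne : p ≠ q) :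
    (1 + p.1 ^ 2)⁻¹ * Gf q p ^ 2
      ≤ 2 / Real.pi ^ 2 * min 1 (q.1 ^ 2) * ((‖p - q‖ ^ 2)⁻¹ * (q.1 ^ 2 + ‖p - q‖ ^ 2)⁻¹) := by
  set d := dist3 p q
  set e := dist3 p (mirror q)
  have hnd : ‖p - q‖ ^ 2 ≤ d ^ 2 := by gcongr; exact norm_sub_le_dist3 p q
  have hn : 0 < ‖p - q‖ := norm_sub_pos_iff.2 hne
  have hmirror : p.1 ^ 2 + q.1 ^ 2 ≤ e ^ 2 := sq_add_sq_le_dist3_mirror_sq hpq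
  have hne2 : q.1 ^ 2 + ‖p - q‖ ^ 2 ≤ 2 * e ^ 2 := by
    linarith [dist3_mirror_sq p q, sq_nonneg p.1]
  have he : 0 < e ^ 2 := by nlinarith [sq_nonneg q.1, pow_pos hn 2]
  calc (1 + p.1 ^ 2)⁻¹ * Gf q p ^ 2
      ≤ (1 + p.1 ^ 2)⁻¹ * ((Real.pi ^ 2)⁻¹ * (p.1 * q.1) ^ 2 / (d ^ 2 * e ^ 4)) := by
        gcongr
        exact Gf_sq_le hpq hne
    _ = (Real.pi ^ 2)⁻¹ * ((1 + p.1 ^ 2)⁻¹ * (p.1 * q.1) ^ 2) / (d ^ 2 * e ^ 4) := by ring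
    _ ≤ (Real.pi ^ 2)⁻¹ * (min 1 (q.1 ^ 2) * e ^ 2) / (d ^ 2 * e ^ 4) := by
        gcongr (Real.pi ^ 2)⁻¹ * ?_ / _
        exact inv_one_add_sq_mul_sq_le_min hmirror
    _ = 2 / Real.pi ^ 2 * min 1 (q.1 ^ 2) * ((d ^ 2)⁻¹ * (2 * e ^ 2)⁻¹) := by
        have := he.ne'
        field_simp
    _ ≤ _ := by gcongr

theorem statement15_general {q : P3} (hq : q ∈ Hsp) :
    ∫⁻ p in Hsp, ENNReal.ofReal ((1 + p.1 ^ 2)⁻¹ * Gf q p ^ 2)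
      ≤ ENNReal.ofReal (24 / Real.pi * min q.1 q.1⁻¹) := by
  have hq0 : 0 < q.1 := hq
  set C := 2 / Real.pi ^ 2 * min 1 (q.1 ^ 2)
  have hbound : ∀ᵐ p ∂volume.restrict Hsp, ENNReal.ofReal ((1 + p.1 ^ 2)⁻¹ * Gf q p ^ 2)
      ≤ ENNReal.ofReal C *
        ENNReal.ofReal ((‖p - q‖ ^ 2)⁻¹ * (q.1 ^ 2 + ‖p - q‖ ^ 2)⁻¹) := by
    filter_upwards [ae_restrict_mem measurableSet_Hsp, ae_restrict_of_ae (Measure.ae_ne volume q)]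
      with p hp hne
    rw [← ENNReal.ofReal_mul (by positivity)]
    exact ENNReal.ofReal_le_ofReal (weighted_Gf_sq_le (mul_pos hp hq0).le hne)
  calc ∫⁻ p in Hsp, ENNReal.ofReal ((1 + p.1 ^ 2)⁻¹ * Gf q p ^ 2)
      ≤ ENNReal.ofReal C *
          ∫⁻ p, ENNReal.ofReal ((‖p - q‖ ^ 2)⁻¹ * (q.1 ^ 2 + ‖p - q‖ ^ 2)⁻¹) := by
        rw [← lintegral_const_mul' _ _ ENNReal.ofReal_ne_top]
        exact (lintegral_mono_ae hbound).trans (setLIntegral_le_lintegral _ _)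
    _ = ENNReal.ofReal (24 / Real.pi * (min 1 (q.1 ^ 2) * q.1⁻¹)) := by
        rw [lintegral_inv_norm_sq_mul_inv_sq_add_norm_sq_P3 q hq0,
          ← ENNReal.ofReal_mul (by positivity)]
        congr 1
        simp only [C]
        field_simp
        ring
    _ = ENNReal.ofReal (24 / Real.pi * min q.1 q.1⁻¹) := by
        rw [min_mul_of_nonneg _ _ (inv_nonneg.2 hq0.le), one_mul, min_comm, sq,
          mul_inv_cancel_right₀ hq0.ne']

end GreenFunction

/-- The Green's function integral estimate (4.11) of the paper. -/
theorem statement15 :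
    ∃ c0 : ℝ, 0 < c0 ∧ ∀ q ∈ Hsp,
      (∫⁻ p in Hsp, ENNReal.ofReal ((1 + p.1^2)⁻¹ * (Gf q p)^2))
        ≤ ENNReal.ofReal (c0 * min q.1 ((1 + |Real.log q.1|) / q.1)) := by
  refine ⟨24 / Real.pi, by positivity, fun q hq => (statement15_general hq).trans ?_⟩
  have hq0 : 0 < q.1 := hq
  gcongr
  rw [inv_eq_one_div]
  gcongr
  exact le_add_of_nonneg_right (abs_nonneg _)

end
end

section
/- Let λ be a real number with λ ≠ 1 and let f : (0,∞) → ℝ be smooth with compact support contained in (0,∞). Then ∫₀^∞ f(t)² t^{λ−2} dt ≤ (4/(λ−1)²) ∫₀^∞ f'(t)² t^{λ} dt. -/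
open MeasureTheory Matrix Filter Set
open scoped ENNReal NNReal Topology

noncomputable section

attribute [local instance] Matrix.normedAddCommGroup Matrix.normedSpace

/-!
Put `u t = ‖f t‖ ^ 2 * t ^ s` with `s = lam - 1`. Expanding the square,
`‖s • f + (2 * t) • f'‖ ^ 2 * t ^ (s - 1)` equals
`4 * (‖f'‖ ^ 2 * t ^ (s + 1)) - s ^ 2 * (‖f‖ ^ 2 * t ^ (s - 1)) + 2 * s * u'`.
The total derivative `u'` contributes nothing: both `u'` and `u / t` are integrable on `(0, ∞)`, so
`u` tends to `0` at both ends.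
-/

section DerivOnIoi

variable {E : Type*} [NormedAddCommGroup E] [NormedSpace ℝ E] {u u' : ℝ → E}

lemma integral_exp_smul_comp_exp (g : ℝ → E) :
    ∫ x, Real.exp x • g (Real.exp x) = ∫ t in Ioi 0, g t := by
  rw [← Real.range_exp, ← image_univ, integral_image_eq_integral_abs_deriv_smul .univ
    (fun x _ => (Real.hasDerivAt_exp x).hasDerivWithinAt) Real.exp_injective.injOn]
  simp only [Real.abs_exp, setIntegral_univ]

lemma integrable_exp_smul_comp_exp_iff (g : ℝ → E) :
    Integrable (fun x => Real.exp x • g (Real.exp x)) ↔ IntegrableOn g (Ioi 0) := by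
  rw [← Real.range_exp, ← image_univ, integrableOn_image_iff_integrableOn_abs_deriv_smul .univ
    (fun x _ => (Real.hasDerivAt_exp x).hasDerivWithinAt) Real.exp_injective.injOn]
  simp only [Real.abs_exp, integrableOn_univ]

/-- `t⁻¹` is the density of the Haar measure of the multiplicative group `(0, ∞)`, so the
substitution `t = exp x` reduces this to the whole line. -/
lemma integral_Ioi_zero_eq_zero_of_hasDerivAt (hderiv : ∀ t ∈ Ioi 0, HasDerivAt u (u' t) t)
    (hu' : IntegrableOn u' (Ioi 0)) (hu : IntegrableOn (fun t => t⁻¹ • u t) (Ioi 0)) :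
    ∫ t in Ioi 0, u' t = 0 := by
  rw [← integral_exp_smul_comp_exp]
  refine integral_eq_zero_of_hasDerivAt_of_integrable (f := fun x => u (Real.exp x))
    (fun x => (hderiv _ (Real.exp_pos x)).scomp x (Real.hasDerivAt_exp x))
    ((integrable_exp_smul_comp_exp_iff u').2 hu') ?_
  simpa only [smul_inv_smul₀ (Real.exp_ne_zero _)] using
    (integrable_exp_smul_comp_exp_iff fun t => t⁻¹ • u t).2 hu

end DerivOnIoi

lemma integrableOn_norm_sq_mul_rpow_of_tsupport_subset_Ioi {E : Type*} [NormedAddCommGroup E]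
    {f : ℝ → E} (hf : Continuous f) (hc : HasCompactSupport f) (hsupp : tsupport f ⊆ Ioi 0)
    (a : ℝ) : IntegrableOn (fun t => ‖f t‖ ^ 2 * t ^ a) (Ioi 0) := by
  have hcont : ContinuousOn (fun t => ‖f t‖ ^ 2 * t ^ a) (tsupport f) :=
    (hf.norm.pow 2).continuousOn.mul <|
      continuousOn_id.rpow_const fun t ht => Or.inl (hsupp ht).ne'
  have hsupport : Function.support (fun t => ‖f t‖ ^ 2 * t ^ a) ⊆ tsupport f := fun t ht =>
    subset_tsupport f fun h0 => ht (by simp [h0])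
  exact ((integrableOn_iff_integrable_of_support_subset hsupport).1
    (hcont.integrableOn_compact hc)).integrableOn

section Hardy

variable {E : Type*} [NormedAddCommGroup E] [InnerProductSpace ℝ E] {f f' : ℝ → E} {s t : ℝ}

lemma hasDerivAt_norm_sq_mul_rpow {y : E} (hf : HasDerivAt f y t) (ht : t ≠ 0) :
    HasDerivAt (fun r => ‖f r‖ ^ 2 * r ^ s)
      (2 * inner ℝ (f t) y * t ^ s + ‖f t‖ ^ 2 * (s * t ^ (s - 1))) t :=
  hf.norm_sq.mul (Real.hasDerivAt_rpow_const (Or.inl ht))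

lemma abs_two_mul_inner_mul_rpow_le (ht : 0 < t) (x y : E) :
    |2 * inner ℝ x y * t ^ s| ≤ ‖x‖ ^ 2 * t ^ (s - 1) + ‖y‖ ^ 2 * t ^ (s + 1) := by
  have hs : t ^ s = t ^ (s - 1) * t := by rw [← Real.rpow_add_one ht.ne', sub_add_cancel]
  calc |2 * inner ℝ x y * t ^ s|
      = 2 * |inner ℝ x y| * t ^ s := by
        rw [abs_mul, abs_mul, abs_two, abs_of_pos (Real.rpow_pos_of_pos ht s)]
    _ ≤ 2 * (‖x‖ * ‖y‖) * t ^ s := by gcongr; exact abs_real_inner_le_norm x y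
    _ = 2 * ‖x‖ * (t * ‖y‖) * t ^ (s - 1) := by rw [hs]; ring
    _ ≤ (‖x‖ ^ 2 + (t * ‖y‖) ^ 2) * t ^ (s - 1) := by gcongr; exact two_mul_le_add_sq _ _
    _ = ‖x‖ ^ 2 * t ^ (s - 1) + ‖y‖ ^ 2 * t ^ (s + 1) := by
        rw [Real.rpow_add_one ht.ne', hs]; ring

lemma norm_smul_add_smul_sq_mul_rpow (ht : 0 < t) (x y : E) :
    ‖s • x + (2 * t) • y‖ ^ 2 * t ^ (s - 1) =
      4 * (‖y‖ ^ 2 * t ^ (s + 1)) - s ^ 2 * (‖x‖ ^ 2 * t ^ (s - 1)) +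
        2 * s * (2 * inner ℝ x y * t ^ s + ‖x‖ ^ 2 * (s * t ^ (s - 1))) := by
  have hs : t ^ s = t ^ (s - 1) * t := by rw [← Real.rpow_add_one ht.ne', sub_add_cancel]
  rw [norm_add_sq_real, norm_smul, norm_smul, real_inner_smul_left, real_inner_smul_right,
    mul_pow, mul_pow, Real.norm_eq_abs, Real.norm_eq_abs, sq_abs, sq_abs,
    Real.rpow_add_one ht.ne', hs]
  ring

lemma integrableOn_deriv_norm_sq_mul_rpow (hf : ∀ t ∈ Ioi 0, HasDerivAt f (f' t) t)
    (hint : IntegrableOn (fun t => ‖f t‖ ^ 2 * t ^ (s - 1)) (Ioi 0))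
    (hint' : IntegrableOn (fun t => ‖f' t‖ ^ 2 * t ^ (s + 1)) (Ioi 0)) :
    IntegrableOn (fun t => 2 * inner ℝ (f t) (f' t) * t ^ s + ‖f t‖ ^ 2 * (s * t ^ (s - 1)))
      (Ioi 0) := by
  have hmeas : AEStronglyMeasurable
      (fun t => 2 * inner ℝ (f t) (f' t) * t ^ s + ‖f t‖ ^ 2 * (s * t ^ (s - 1)))
      (volume.restrict (Ioi 0)) :=
    (aestronglyMeasurable_deriv (fun t => ‖f t‖ ^ 2 * t ^ s) _).congr <|
      (ae_restrict_mem measurableSet_Ioi).mono fun t ht =>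
        (hasDerivAt_norm_sq_mul_rpow (hf t ht) ht.ne').deriv
  refine ((hint.add hint').add (hint.const_mul |s|)).mono' hmeas ?_
  filter_upwards [ae_restrict_mem measurableSet_Ioi] with t ht
  refine (norm_add_le _ _).trans (add_le_add (abs_two_mul_inner_mul_rpow_le ht _ _) (le_of_eq ?_))
  have hw : 0 < t ^ (s - 1) := Real.rpow_pos_of_pos ht _
  rw [mul_left_comm, norm_mul, Real.norm_eq_abs, Real.norm_of_nonneg (by positivity)]

theorem integral_norm_smul_add_smul_sq_mul_rpow (hf : ∀ t ∈ Ioi 0, HasDerivAt f (f' t) t)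
    (hint : IntegrableOn (fun t => ‖f t‖ ^ 2 * t ^ (s - 1)) (Ioi 0))
    (hint' : IntegrableOn (fun t => ‖f' t‖ ^ 2 * t ^ (s + 1)) (Ioi 0)) :
    ∫ t in Ioi 0, ‖s • f t + (2 * t) • f' t‖ ^ 2 * t ^ (s - 1) =
      4 * (∫ t in Ioi 0, ‖f' t‖ ^ 2 * t ^ (s + 1)) -
        s ^ 2 * ∫ t in Ioi 0, ‖f t‖ ^ 2 * t ^ (s - 1) := by
  have hderiv_int := integrableOn_deriv_norm_sq_mul_rpow hf hint hint'
  have hquot : IntegrableOn (fun t => t⁻¹ • (‖f t‖ ^ 2 * t ^ s)) (Ioi 0) :=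
    hint.congr_fun (fun t ht => by
      simp only [Real.rpow_sub_one (ne_of_gt ht), smul_eq_mul]; ring) measurableSet_Ioi
  have hderiv_zero := integral_Ioi_zero_eq_zero_of_hasDerivAt
    (fun t ht => hasDerivAt_norm_sq_mul_rpow (hf t ht) (ne_of_gt ht)) hderiv_int hquot
  have hmain_int : IntegrableOn (fun t => 4 * (‖f' t‖ ^ 2 * t ^ (s + 1)) -
      s ^ 2 * (‖f t‖ ^ 2 * t ^ (s - 1))) (Ioi 0) := (hint'.const_mul 4).sub (hint.const_mul (s ^ 2))
  rw [setIntegral_congr_fun measurableSet_Ioi fun t ht => norm_smul_add_smul_sq_mul_rpow ht _ _,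
    integral_add hmain_int (hderiv_int.const_mul _),
    integral_sub (hint'.const_mul 4) (hint.const_mul (s ^ 2)), integral_const_mul,
    integral_const_mul, integral_const_mul, hderiv_zero, mul_zero, add_zero]

theorem statement17_general {lam : ℝ} (hlam : lam ≠ 1) (hf : ∀ t ∈ Ioi 0, HasDerivAt f (f' t) t)
    (hint : IntegrableOn (fun t => ‖f t‖ ^ 2 * t ^ (lam - 2)) (Ioi 0))
    (hint' : IntegrableOn (fun t => ‖f' t‖ ^ 2 * t ^ lam) (Ioi 0)) :
    ∫ t in Ioi 0, ‖f t‖ ^ 2 * t ^ (lam - 2) ≤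
      4 / (lam - 1) ^ 2 * ∫ t in Ioi 0, ‖f' t‖ ^ 2 * t ^ lam := by
  have hpos : 0 < (lam - 1) ^ 2 := sq_pos_of_ne_zero (sub_ne_zero.2 hlam)
  have hsub : lam - 2 = lam - 1 - 1 := by ring
  have hnonneg : 0 ≤ ∫ t in Ioi 0, ‖(lam - 1) • f t + (2 * t) • f' t‖ ^ 2 * t ^ (lam - 1 - 1) :=
    setIntegral_nonneg measurableSet_Ioi fun t ht =>
      mul_nonneg (sq_nonneg _) (Real.rpow_nonneg (le_of_lt ht) _)
  rw [integral_norm_smul_add_smul_sq_mul_rpow hf (hsub ▸ hint) (by simpa using hint'), ← hsub,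
    sub_add_cancel] at hnonneg
  rw [div_mul_eq_mul_div, le_div_iff₀' hpos]
  exact sub_nonneg.1 hnonneg

end Hardy

/-- The one-dimensional weighted Hardy inequality (A.3) of the paper. -/
theorem statement17 (lam : ℝ) (hlam : lam ≠ 1) (f : ℝ → ℝ) (hf : ContDiff ℝ (⊤:ℕ∞) f)
    (hc : HasCompactSupport f) (hsupp : tsupport f ⊆ Set.Ioi (0:ℝ)) :
    (∫ t in Set.Ioi (0:ℝ), (f t)^2 * t ^ (lam - 2))
      ≤ (4 / (lam - 1)^2) * ∫ t in Set.Ioi (0:ℝ), (deriv f t)^2 * t ^ lam := by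
  simpa only [Real.norm_eq_abs, sq_abs] using statement17_general (f := f) (f' := deriv f) hlam
    (fun t _ => (hf.differentiable (by simp) t).hasDerivAt)
    (integrableOn_norm_sq_mul_rpow_of_tsupport_subset_Ioi hf.continuous hc hsupp _)
    (integrableOn_norm_sq_mul_rpow_of_tsupport_subset_Ioi (hf.continuous_deriv (by simp))
      hc.deriv (tsupport_deriv_subset.trans hsupp) _)

end
end

section
/- For every integer m ≥ 0, the model data set (A^{(m)}, φ^{(m)}, a₃^{(m)}) satisfies all four ℝ-invariant Kapustin–Witten equations (i)–(iv) at every point of {(t,z) ∈ H : z ≠ 0}. -/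
open MeasureTheory Matrix Filter Set
open scoped ENNReal NNReal Topology

noncomputable section

attribute [local instance] Matrix.normedAddCommGroup Matrix.normedSpace

/-! For a real potential `v` and a holomorphic function `h`, consider the abelian ansatz `A_t = 0`,
`A₁ = ½ (∂₂v) σ₃`, `A₂ = -½ (∂₁v) σ₃`, `a₃ = ½ (∂_t v) σ₃`, `φ = eᵛ h(z) (σ₁ - iσ₂)`. Equations
(i)-(iii) hold identically, by the symmetry of second derivatives and the Cauchy-Riemann equations,
and equation (iv) becomes the Liouville equation `Δv = 4 |h|² e^{2v}`.

With `n = m + 1`, the model data set is the case `h(z) = -zᵐ`, `v = F(Θ) - n log |z|`, where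
`F(x) = log (n / (2 sinh (n x)))` satisfies `F'' = 4 e^{2F}`. Since `Θ` and `log |z|` are harmonic
and `|∇Θ|² = 1 / |z|²`, we get `Δv = 4 e^{2F(Θ)} / |z|² = 4 |z|^{2m} e^{2v}`. The facts about `Θ`
follow by applying the chain rule to `sinh Θ = t / |z|`, which avoids differentiating `arsinh`. -/

section Calculus

section NormedSpace

variable {𝕜 E F : Type*} [NontriviallyNormedField 𝕜] [NormedAddCommGroup E] [NormedSpace 𝕜 E]
  [NormedAddCommGroup F] [NormedSpace 𝕜 F] {f : E → F} {x : E}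

lemma eventually_differentiableAt (hf : ContDiffAt 𝕜 1 f x) :
    ∀ᶠ y in 𝓝 x, DifferentiableAt 𝕜 f y :=
  (hf.eventually (by decide)).mono fun _ hy => hy.differentiableAt one_ne_zero

lemma differentiableAt_fderiv (hf : ContDiffAt 𝕜 2 f x) : DifferentiableAt 𝕜 (fderiv 𝕜 f) x :=
  (hf.fderiv_right (m := 1) le_rfl).differentiableAt one_ne_zero

end NormedSpace

variable {f g : P3 → ℝ} {p : P3}

lemma pdR_of_hasFDerivAt {f' : P3 →L[ℝ] ℝ} (hf : HasFDerivAt f f' p) (e : P3) :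
    pdR e f p = f' e := by
  rw [pdR, hf.fderiv]

lemma pdR_congr (h : f =ᶠ[𝓝 p] g) (e : P3) : pdR e f p = pdR e g p := by
  rw [pdR, pdR, h.fderiv_eq]

lemma pdR_comp {F : ℝ → ℝ} {F' : ℝ} (hF : HasDerivAt F F' (f p)) (hf : DifferentiableAt ℝ f p)
    (e : P3) : pdR e (fun q => F (f q)) p = F' * pdR e f p :=
  pdR_of_hasFDerivAt (hF.comp_hasFDerivAt p hf.hasFDerivAt) e

lemma pdR_sub_const_mul (hf : DifferentiableAt ℝ f p) (hg : DifferentiableAt ℝ g p) (c : ℝ)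
    (e : P3) : pdR e (fun q => f q - c * g q) p = pdR e f p - c * pdR e g p :=
  pdR_of_hasFDerivAt (hf.hasFDerivAt.fun_sub (hg.hasFDerivAt.const_mul c)) e

lemma pdR_mul (hf : DifferentiableAt ℝ f p) (hg : DifferentiableAt ℝ g p) (e : P3) :
    pdR e (fun q => f q * g q) p = f p * pdR e g p + g p * pdR e f p :=
  pdR_of_hasFDerivAt (hf.hasFDerivAt.fun_mul hg.hasFDerivAt) e

lemma differentiableAt_pdR (hf : ContDiffAt ℝ 2 f p) (e : P3) :
    DifferentiableAt ℝ (pdR e f) p :=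
  (differentiableAt_fderiv hf).clm_apply (differentiableAt_const e)

lemma pdR_pdR_comm (hf : ContDiffAt ℝ 2 f p) (e e' : P3) :
    pdR e (pdR e' f) p = pdR e' (pdR e f) p := by
  have hsnd (u u' : P3) : pdR u (pdR u' f) p = fderiv ℝ (fderiv ℝ f) p u u' :=
    (pdR_of_hasFDerivAt ((differentiableAt_fderiv hf).hasFDerivAt.clm_apply
      (hasFDerivAt_const u' p)) u).trans (by simp)
  rw [hsnd, hsnd, (hf.isSymmSndFDerivAt (by simp)).eq]

/-- The squared gradient `|∇f|²` for the flat metric `dt² + dz₁² + dz₂²`. -/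
def gradSq (f : P3 → ℝ) (p : P3) : ℝ := pdR et f p ^ 2 + pdR ez1 f p ^ 2 + pdR ez2 f p ^ 2

lemma gradSq_comp {F : ℝ → ℝ} {F' : ℝ} (hF : HasDerivAt F F' (f p))
    (hf : DifferentiableAt ℝ f p) : gradSq (fun q => F (f q)) p = F' ^ 2 * gradSq f p := by
  simp only [gradSq, pdR_comp hF hf]
  ring

lemma pdR_pdR_comp {F F' : ℝ → ℝ} {F'' : ℝ} (hF : ∀ᶠ x in 𝓝 (f p), HasDerivAt F (F' x) x)
    (hF' : HasDerivAt F' F'' (f p)) (hf : ContDiffAt ℝ 2 f p) (e : P3) :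
    pdR e (pdR e fun q => F (f q)) p
      = F'' * pdR e f p ^ 2 + F' (f p) * pdR e (pdR e f) p := by
  have hfd : DifferentiableAt ℝ f p := hf.differentiableAt two_ne_zero
  have hfirst : pdR e (fun q => F (f q)) =ᶠ[𝓝 p] fun q => F' (f q) * pdR e f q := by
    filter_upwards [hf.continuousAt.eventually hF,
      eventually_differentiableAt (hf.of_le one_le_two)] with q hFq hfq
    exact pdR_comp hFq hfq e
  have hF'f : DifferentiableAt ℝ (fun q => F' (f q)) p :=
    (hF'.comp_hasFDerivAt p hfd.hasFDerivAt).differentiableAt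
  rw [pdR_congr hfirst, pdR_mul hF'f (differentiableAt_pdR hf e), pdR_comp hF' hfd]
  ring

lemma lap3_comp {F F' : ℝ → ℝ} {F'' : ℝ} (hF : ∀ᶠ x in 𝓝 (f p), HasDerivAt F (F' x) x)
    (hF' : HasDerivAt F' F'' (f p)) (hf : ContDiffAt ℝ 2 f p) :
    lap3 (fun q => F (f q)) p = F'' * gradSq f p + F' (f p) * lap3 f p := by
  simp only [lap3, gradSq, pdR_pdR_comp hF hF' hf]
  ring

lemma lap3_sub_const_mul (hf : ContDiffAt ℝ 2 f p) (hg : ContDiffAt ℝ 2 g p) (c : ℝ) :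
    lap3 (fun q => f q - c * g q) p = lap3 f p - c * lap3 g p := by
  have hsnd (e : P3) : pdR e (pdR e fun q => f q - c * g q) p
      = pdR e (pdR e f) p - c * pdR e (pdR e g) p := by
    have hfirst : pdR e (fun q => f q - c * g q) =ᶠ[𝓝 p] fun q => pdR e f q - c * pdR e g q := by
      filter_upwards [eventually_differentiableAt (hf.of_le one_le_two),
        eventually_differentiableAt (hg.of_le one_le_two)] with q hfq hgq
      exact pdR_sub_const_mul hfq hgq c e
    rw [pdR_congr hfirst, pdR_sub_const_mul (differentiableAt_pdR hf e) (differentiableAt_pdR hg e)]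
  simp only [lap3, hsnd]
  ring

end Calculus

section Coordinates

/-- The coordinate differential `dt`. -/
def dt : P3 →L[ℝ] ℝ := ContinuousLinearMap.fst ℝ ℝ (ℝ × ℝ)

/-- The coordinate differential `dz₁`. -/
def dz1 : P3 →L[ℝ] ℝ := (ContinuousLinearMap.fst ℝ ℝ ℝ).comp (ContinuousLinearMap.snd ℝ ℝ (ℝ × ℝ))

/-- The coordinate differential `dz₂`. -/
def dz2 : P3 →L[ℝ] ℝ := (ContinuousLinearMap.snd ℝ ℝ ℝ).comp (ContinuousLinearMap.snd ℝ ℝ (ℝ × ℝ))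

/-- The complex differential `dz = dz₁ + i dz₂`. -/
def dz : P3 →L[ℝ] ℂ := Complex.ofRealCLM.comp dz1 + Complex.I • Complex.ofRealCLM.comp dz2

@[simp] lemma dt_apply (e : P3) : dt e = e.1 := rfl

@[simp] lemma dz1_apply (e : P3) : dz1 e = e.2.1 := rfl

@[simp] lemma dz2_apply (e : P3) : dz2 e = e.2.2 := rfl

lemma dz_et : dz et = 0 := by simp [dz, et]

lemma dz_ez1 : dz ez1 = 1 := by simp [dz, ez1]

lemma dz_ez2 : dz ez2 = Complex.I := by simp [dz, ez2]

variable (p : P3)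

lemma hasFDerivAt_t : HasFDerivAt (fun q : P3 => q.1) dt p := dt.hasFDerivAt

lemma hasFDerivAt_z1 : HasFDerivAt (fun q : P3 => q.2.1) dz1 p := dz1.hasFDerivAt

lemma hasFDerivAt_z2 : HasFDerivAt (fun q : P3 => q.2.2) dz2 p := dz2.hasFDerivAt

lemma hasFDerivAt_zc : HasFDerivAt zc dz p := dz.hasFDerivAt

end Coordinates

section AbelianAnsatz

/-- The nilpotent element `σ₁ - iσ₂` of `sl(2,ℂ)`, an eigenvector of `[σ₃, ·]`; it spans the values
of the Higgs fields considered here. -/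
def sMinus : M2 := s1 - Complex.I • s2

lemma sMinus_eq : sMinus = !![0, 0; 2 * Complex.I, 0] := by
  ext i j
  fin_cases i <;> fin_cases j <;> simp [sMinus, s1, s2, two_mul]

lemma mcomm_s3_s3 (x y : ℂ) : mcomm (x • s3) (y • s3) = 0 := by
  simp [mcomm, smul_smul, mul_comm]

lemma mcomm_s3_sMinus (x y : ℂ) :
    mcomm (x • s3) (y • sMinus) = (-2 * Complex.I * x * y) • sMinus := by
  ext i j
  fin_cases i <;> fin_cases j <;> simp [mcomm, sMinus_eq, s3]
  ring

lemma mcomm_sMinus_mstar (w : ℂ) :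
    mcomm (w • sMinus) (mstar (w • sMinus)) = (-4 * Complex.I * Complex.normSq w) • s3 := by
  have hstar : mstar (w • sMinus) = !![0, 2 * Complex.I * starRingEnd ℂ w; 0, 0] := by
    ext i j
    fin_cases i <;> fin_cases j <;> simp [mstar, sMinus_eq, mul_comm]
  rw [mcomm, hstar, sMinus_eq]
  ext i j
  fin_cases i <;> fin_cases j <;> simp [s3, Complex.normSq_eq_conj_mul_self] <;> ring

lemma mcomm_zero_left (X : M2) : mcomm 0 X = 0 := by simp [mcomm]

lemma s3_ne_zero : s3 ≠ 0 := fun h => Complex.I_ne_zero (congr_fun₂ h 0 0)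

/-- The connection component `A₁ = ½ (∂_{z₂} v) σ₃` determined by a potential `v`. -/
def abelianA1 (v : P3 → ℝ) (q : P3) : M2 := ((1 / 2 * pdR ez2 v q : ℝ) : ℂ) • s3

/-- The connection component `A₂ = -½ (∂_{z₁} v) σ₃` determined by a potential `v`. -/
def abelianA2 (v : P3 → ℝ) (q : P3) : M2 := ((-(1 / 2) * pdR ez1 v q : ℝ) : ℂ) • s3

/-- The field `a₃ = ½ (∂_t v) σ₃` determined by a potential `v`. -/
def abelianA3 (v : P3 → ℝ) (q : P3) : M2 := ((1 / 2 * pdR et v q : ℝ) : ℂ) • s3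

/-- The Higgs field `φ = eᵛ h(z) (σ₁ - iσ₂)` determined by a potential `v` and a function `h` of
the complex coordinate `z`, meant to be holomorphic. -/
def abelianPhi (v : P3 → ℝ) (h : ℂ → ℂ) (q : P3) : M2 :=
  ((Real.exp (v q) : ℂ) * h (zc q)) • sMinus

variable {v : P3 → ℝ} {h : ℂ → ℂ} {p : P3}

lemma pd_zero (e : P3) : pd e (0 : P3 → M2) p = 0 := by
  simp [pd]

lemma pd_const_mul_pdR_smul (hv : ContDiffAt ℝ 2 v p) (c : ℝ) (e e' : P3) (M : M2) :
    pd e (fun q => ((c * pdR e' v q : ℝ) : ℂ) • M) p = ((c * pdR e (pdR e' v) p : ℝ) : ℂ) • M :=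
  DFunLike.congr_fun ((Complex.ofRealCLM.hasFDerivAt.comp p
    ((differentiableAt_pdR hv e').hasFDerivAt.const_mul c)).smul_const M).fderiv e

lemma pd_abelianPhi (hv : DifferentiableAt ℝ v p) (hh : DifferentiableAt ℂ h (zc p)) (e : P3) :
    pd e (abelianPhi v h) p
      = (Real.exp (v p) * (pdR e v p * h (zc p) + deriv h (zc p) * dz e)) • sMinus := by
  have hexp := Complex.ofRealCLM.hasFDerivAt.comp p hv.hasFDerivAt.exp
  have hhol := hh.hasDerivAt.comp_hasFDerivAt_of_eq p (hasFDerivAt_zc p) rfl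
  refine (DFunLike.congr_fun ((hexp.fun_mul hhol).smul_const sMinus).fderiv e).trans ?_
  rw [ContinuousLinearMap.smulRight_apply]
  congr 1
  simp only [Function.comp_apply, Complex.ofRealCLM_apply, Complex.ofReal_exp,
    ContinuousLinearMap.comp_apply, _root_.add_apply, _root_.smul_apply, smul_eq_mul,
    Complex.ofReal_mul, pdR]
  ring

lemma pd_abelianA1 (hv : ContDiffAt ℝ 2 v p) (e : P3) :
    pd e (abelianA1 v) p = ((1 / 2 * pdR e (pdR ez2 v) p : ℝ) : ℂ) • s3 :=
  pd_const_mul_pdR_smul hv _ e ez2 s3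

lemma pd_abelianA2 (hv : ContDiffAt ℝ 2 v p) (e : P3) :
    pd e (abelianA2 v) p = ((-(1 / 2) * pdR e (pdR ez1 v) p : ℝ) : ℂ) • s3 :=
  pd_const_mul_pdR_smul hv _ e ez1 s3

lemma pd_abelianA3 (hv : ContDiffAt ℝ 2 v p) (e : P3) :
    pd e (abelianA3 v) p = ((1 / 2 * pdR e (pdR et v) p : ℝ) : ℂ) • s3 :=
  pd_const_mul_pdR_smul hv _ e et s3

theorem kw123At_abelian (hv : ContDiffAt ℝ 2 v p) (hh : DifferentiableAt ℂ h (zc p)) :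
    KW123At 0 (abelianA1 v) (abelianA2 v) (abelianA3 v) (abelianPhi v h) p := by
  have hphi := pd_abelianPhi (hv.differentiableAt two_ne_zero) hh
  simp only [KW123At, EA1Of, EA2Of, cd, pd_abelianA1 hv, pd_abelianA2 hv, pd_abelianA3 hv, hphi,
    pd_zero, abelianA1, abelianA2, abelianA3, abelianPhi, mcomm_s3_s3, mcomm_s3_sMinus,
    mcomm_zero_left, Pi.zero_apply, sub_zero, add_zero]
  refine ⟨?_, ?_, ?_, ?_⟩
  · rw [pdR_pdR_comm hv et]
  · rw [pdR_pdR_comm hv et, ← neg_smul, neg_mul, Complex.ofReal_neg]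
  · simp only [smul_smul, ← add_smul]
    refine smul_eq_zero_of_left ?_ _
    rw [dz_ez1, dz_ez2]
    push_cast
    linear_combination Complex.exp (v p) * (pdR ez1 v p * h (zc p) + deriv h (zc p)) * Complex.I_sq
  · rw [smul_smul]
    congr 1
    rw [dz_et]
    push_cast
    linear_combination Complex.exp (v p) * pdR et v p * h (zc p) * Complex.I_sq

theorem kw4At_abelian_iff (hv : ContDiffAt ℝ 2 v p) :
    KW4At 0 (abelianA1 v) (abelianA2 v) (abelianA3 v) (abelianPhi v h) p ↔
      lap3 v p = 4 * Complex.normSq (h (zc p)) * Real.exp (2 * v p) := by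
  have hHiggs : Complex.I * (2 : ℂ)⁻¹ * (-4 * Complex.I
      * Complex.normSq (Real.exp (v p) * h (zc p)))
      = ((2 * Complex.normSq (h (zc p)) * Real.exp (2 * v p) : ℝ) : ℂ) := by
    rw [map_mul, Complex.normSq_ofReal, ← Real.exp_add, ← two_mul]
    push_cast
    linear_combination (-2 * Complex.exp (2 * v p) * Complex.normSq (h (zc p))) * Complex.I_sq
  simp only [KW4At, B3Of, cd, pd_abelianA1 hv, pd_abelianA2 hv, pd_abelianA3 hv,
    abelianA1, abelianA2, abelianPhi, mcomm_s3_s3, mcomm_sMinus_mstar, mcomm_zero_left,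
    Pi.zero_apply, add_zero, smul_smul, ← sub_smul, ← add_smul, hHiggs]
  rw [(smul_left_injective ℂ s3_ne_zero).eq_iff]
  simp only [← Complex.ofReal_sub, ← Complex.ofReal_add, Complex.ofReal_inj, lap3]
  exact ⟨fun hL => by linear_combination 2 * hL, fun hL => by linear_combination 1 / 2 * hL⟩

end AbelianAnsatz

section Congruence

variable {A_t A_t' A₁ A₁' A₂ A₂' a₃ a₃' φ φ' A A' f f' : P3 → M2} {p : P3}

lemma pd_congr (hf : f =ᶠ[𝓝 p] f') (e : P3) : pd e f p = pd e f' p := by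
  rw [pd, pd, hf.fderiv_eq]

lemma cd_congr (hA : A =ᶠ[𝓝 p] A') (hf : f =ᶠ[𝓝 p] f') (e : P3) :
    cd A e f p = cd A' e f' p := by
  rw [cd, cd, pd_congr hf, hA.eq_of_nhds, hf.eq_of_nhds]

lemma kw123At_congr (ht : A_t =ᶠ[𝓝 p] A_t') (h1 : A₁ =ᶠ[𝓝 p] A₁') (h2 : A₂ =ᶠ[𝓝 p] A₂')
    (h3 : a₃ =ᶠ[𝓝 p] a₃') (hφ : φ =ᶠ[𝓝 p] φ') :
    KW123At A_t A₁ A₂ a₃ φ p ↔ KW123At A_t' A₁' A₂' a₃' φ' p := by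
  simp only [KW123At, EA1Of, EA2Of, pd_congr ht, pd_congr h1, pd_congr h2, cd_congr h2 h3,
    cd_congr h1 h3, cd_congr h1 hφ, cd_congr h2 hφ, cd_congr ht hφ, ht.eq_of_nhds, h1.eq_of_nhds,
    h2.eq_of_nhds, h3.eq_of_nhds, hφ.eq_of_nhds]

lemma kw4At_congr (ht : A_t =ᶠ[𝓝 p] A_t') (h1 : A₁ =ᶠ[𝓝 p] A₁') (h2 : A₂ =ᶠ[𝓝 p] A₂')
    (h3 : a₃ =ᶠ[𝓝 p] a₃') (hφ : φ =ᶠ[𝓝 p] φ') :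
    KW4At A_t A₁ A₂ a₃ φ p ↔ KW4At A_t' A₁' A₂' a₃' φ' p := by
  simp only [KW4At, B3Of, pd_congr h1, pd_congr h2, cd_congr ht h3, h1.eq_of_nhds, h2.eq_of_nhds,
    hφ.eq_of_nhds]

end Congruence

section Geometry

variable {p : P3} {g : P3 → ℝ}

lemma pdR_t_mul (hg : DifferentiableAt ℝ g p) (e : P3) :
    pdR e (fun q => q.1 * g q) p = p.1 * pdR e g p + e.1 * g p := by
  rw [pdR_mul (hasFDerivAt_t p).differentiableAt hg, pdR_of_hasFDerivAt (hasFDerivAt_t p), dt_apply,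
    mul_comm (g p)]

lemma gradSq_t_mul (hg : DifferentiableAt ℝ g p) :
    gradSq (fun q => q.1 * g q) p
      = p.1 ^ 2 * gradSq g p + 2 * p.1 * g p * pdR et g p + g p ^ 2 := by
  simp only [gradSq, pdR_t_mul hg, et, ez1, ez2]
  ring

lemma lap3_t_mul (hg : ContDiffAt ℝ 2 g p) :
    lap3 (fun q => q.1 * g q) p = p.1 * lap3 g p + 2 * pdR et g p := by
  have hsnd (e : P3) : pdR e (pdR e fun q => q.1 * g q) p
      = p.1 * pdR e (pdR e g) p + 2 * (e.1 * pdR e g p) := by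
    have hfirst : pdR e (fun q => q.1 * g q) =ᶠ[𝓝 p] fun q => q.1 * pdR e g q - -e.1 * g q := by
      filter_upwards [eventually_differentiableAt (hg.of_le one_le_two)] with q hgq
      rw [pdR_t_mul hgq, neg_mul, sub_neg_eq_add]
    have hg' := differentiableAt_pdR hg e
    rw [pdR_congr hfirst, pdR_sub_const_mul ((hasFDerivAt_t p).differentiableAt.fun_mul hg')
      (hg.differentiableAt two_ne_zero), pdR_t_mul hg']
    ring
  simp only [lap3, hsnd, et, ez1, ez2]
  ring

lemma znorm_sq (p : P3) : znorm p ^ 2 = p.2.1 ^ 2 + p.2.2 ^ 2 :=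
  Real.sq_sqrt (by positivity)

lemma sq_add_sq_pos (hz : p.2 ≠ 0) : 0 < p.2.1 ^ 2 + p.2.2 ^ 2 := by
  have h : p.2.1 ≠ 0 ∨ p.2.2 ≠ 0 := by
    by_contra! h
    exact hz (Prod.ext h.1 h.2)
  rcases h with h | h <;> positivity

lemma znorm_pos (hz : p.2 ≠ 0) : 0 < znorm p := Real.sqrt_pos.2 (sq_add_sq_pos hz)

lemma eventually_z_ne_zero (hz : p.2 ≠ 0) : ∀ᶠ q : P3 in 𝓝 p, q.2 ≠ 0 :=
  continuous_snd.continuousAt.eventually_ne hz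

lemma contDiffAt_znorm {n : WithTop ℕ∞} (hz : p.2 ≠ 0) : ContDiffAt ℝ n znorm p := by
  have hsq : ContDiff ℝ n fun q : P3 => q.2.1 ^ 2 + q.2.2 ^ 2 := by fun_prop
  exact hsq.contDiffAt.sqrt (sq_add_sq_pos hz).ne'

lemma differentiableAt_znorm (hz : p.2 ≠ 0) : DifferentiableAt ℝ znorm p :=
  (contDiffAt_znorm hz).differentiableAt one_ne_zero

lemma pdR_znorm (hz : p.2 ≠ 0) (e : P3) :
    pdR e znorm p = (p.2.1 * e.2.1 + p.2.2 * e.2.2) * (znorm p)⁻¹ := by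
  have h := (((hasFDerivAt_z1 p).pow 2).fun_add ((hasFDerivAt_z2 p).pow 2)).sqrt
    (sq_add_sq_pos hz).ne'
  refine (pdR_of_hasFDerivAt h e).trans ?_
  simp only [_root_.smul_apply, _root_.add_apply, dz1_apply, dz2_apply, smul_eq_mul, nsmul_eq_mul,
    znorm]
  push_cast
  field_simp

lemma pdR_et_znorm (hz : p.2 ≠ 0) : pdR et znorm p = 0 := by
  simp [pdR_znorm hz, et]

lemma gradSq_znorm (hz : p.2 ≠ 0) : gradSq znorm p = 1 := by
  have hr := znorm_pos hz
  simp only [gradSq, pdR_znorm hz, et, ez1, ez2]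
  field_simp
  linear_combination -znorm_sq p

lemma lap3_znorm (hz : p.2 ≠ 0) : lap3 znorm p = (znorm p)⁻¹ := by
  have hr := znorm_pos hz
  have hsnd (e : P3) : pdR e (pdR e znorm) p
      = (e.2.1 ^ 2 + e.2.2 ^ 2) * (znorm p)⁻¹
        - (p.2.1 * e.2.1 + p.2.2 * e.2.2) ^ 2 * (znorm p)⁻¹ ^ 3 := by
    have hfirst : pdR e znorm =ᶠ[𝓝 p]
        fun q => (q.2.1 * e.2.1 + q.2.2 * e.2.2) * (znorm q)⁻¹ :=
      (eventually_z_ne_zero hz).mono fun q hq => pdR_znorm hq e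
    have hlin := ((hasFDerivAt_z1 p).mul_const e.2.1).fun_add ((hasFDerivAt_z2 p).mul_const e.2.2)
    rw [pdR_congr hfirst,
      pdR_mul hlin.differentiableAt ((differentiableAt_znorm hz).fun_inv hr.ne'),
      pdR_of_hasFDerivAt hlin, pdR_comp (hasDerivAt_inv hr.ne') (differentiableAt_znorm hz),
      pdR_znorm hz]
    simp only [_root_.add_apply, _root_.smul_apply, dz1_apply, dz2_apply, smul_eq_mul]
    field_simp
    ring
  simp only [lap3, hsnd, et, ez1, ez2]
  field_simp
  linear_combination znorm_sq p

lemma lap3_log_znorm (hz : p.2 ≠ 0) : lap3 (fun q => Real.log (znorm q)) p = 0 := by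
  have hr := znorm_pos hz
  have hlog : ∀ᶠ x in 𝓝 (znorm p), HasDerivAt Real.log x⁻¹ x :=
    (eventually_ne_nhds hr.ne').mono fun x hx => Real.hasDerivAt_log hx
  rw [lap3_comp hlog (hasDerivAt_inv hr.ne') (contDiffAt_znorm hz), gradSq_znorm hz, lap3_znorm hz]
  field_simp
  ring

lemma pdR_et_inv_znorm (hz : p.2 ≠ 0) : pdR et (fun q => (znorm q)⁻¹) p = 0 := by
  rw [pdR_comp (hasDerivAt_inv (znorm_pos hz).ne') (differentiableAt_znorm hz), pdR_et_znorm hz,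
    mul_zero]

lemma gradSq_inv_znorm (hz : p.2 ≠ 0) : gradSq (fun q => (znorm q)⁻¹) p = (znorm p ^ 4)⁻¹ := by
  rw [gradSq_comp (hasDerivAt_inv (znorm_pos hz).ne') (differentiableAt_znorm hz), gradSq_znorm hz]
  field_simp

lemma lap3_inv_znorm (hz : p.2 ≠ 0) : lap3 (fun q => (znorm q)⁻¹) p = (znorm p ^ 3)⁻¹ := by
  have hr := znorm_pos hz
  have hinv : ∀ᶠ x in 𝓝 (znorm p), HasDerivAt (fun y : ℝ => y⁻¹) (-(x ^ 2)⁻¹) x :=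
    (eventually_ne_nhds hr.ne').mono fun x hx => hasDerivAt_inv hx
  have hinv' : HasDerivAt (fun x : ℝ => -(x ^ 2)⁻¹) (2 * (znorm p ^ 3)⁻¹) (znorm p) := by
    refine ((hasDerivAt_pow 2 (znorm p)).fun_inv (by positivity)).fun_neg.congr_deriv ?_
    norm_num
    field_simp
  rw [lap3_comp hinv hinv' (contDiffAt_znorm hz), gradSq_znorm hz, lap3_znorm hz]
  field_simp
  ring

lemma sinh_Th (p : P3) : Real.sinh (Th p) = p.1 * (znorm p)⁻¹ := Real.sinh_arsinh _

lemma sinh_comp_Th : (fun q => Real.sinh (Th q)) = fun q => q.1 * (znorm q)⁻¹ := funext sinh_Th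

lemma contDiffAt_inv_znorm {n : WithTop ℕ∞} (hz : p.2 ≠ 0) :
    ContDiffAt ℝ n (fun q => (znorm q)⁻¹) p :=
  (contDiffAt_znorm hz).inv (znorm_pos hz).ne'

lemma contDiffAt_Th {n : ℕ∞} (hz : p.2 ≠ 0) : ContDiffAt ℝ n Th p :=
  (contDiffAt_fst.mul (contDiffAt_inv_znorm hz)).arsinh

lemma differentiableAt_Th (hz : p.2 ≠ 0) : DifferentiableAt ℝ Th p :=
  (contDiffAt_Th hz).differentiableAt one_ne_zero

lemma pdR_Th (hz : p.2 ≠ 0) (e : P3) :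
    pdR e Th p = (e.1 - Real.sinh (Th p) * (p.2.1 * e.2.1 + p.2.2 * e.2.2) / znorm p)
      / (znorm p * Real.cosh (Th p)) := by
  have hr := znorm_pos hz
  have hcosh := Real.cosh_pos (Th p)
  have hsinh : Real.cosh (Th p) * pdR e Th p
      = p.1 * (-(znorm p ^ 2)⁻¹ * ((p.2.1 * e.2.1 + p.2.2 * e.2.2) * (znorm p)⁻¹))
        + e.1 * (znorm p)⁻¹ := by
    rw [← pdR_comp (Real.hasDerivAt_sinh _) (differentiableAt_Th hz), sinh_comp_Th,
      pdR_t_mul ((contDiffAt_inv_znorm hz).differentiableAt one_ne_zero),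
      pdR_comp (hasDerivAt_inv hr.ne') (differentiableAt_znorm hz), pdR_znorm hz]
  rw [← mul_right_inj' hcosh.ne', hsinh, sinh_Th]
  field_simp
  ring

lemma gradSq_Th (hz : p.2 ≠ 0) : gradSq Th p = (znorm p ^ 2)⁻¹ := by
  have hr := znorm_pos hz
  have hsinh : Real.cosh (Th p) ^ 2 * gradSq Th p = Real.cosh (Th p) ^ 2 * (znorm p ^ 2)⁻¹ := by
    rw [← gradSq_comp (Real.hasDerivAt_sinh _) (differentiableAt_Th hz), sinh_comp_Th,
      gradSq_t_mul ((contDiffAt_inv_znorm hz).differentiableAt one_ne_zero),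
      gradSq_inv_znorm hz, pdR_et_inv_znorm hz, Real.cosh_sq, sinh_Th]
    field_simp
    ring
  exact mul_left_cancel₀ (pow_pos (Real.cosh_pos _) 2).ne' hsinh

lemma lap3_Th (hz : p.2 ≠ 0) : lap3 Th p = 0 := by
  have hr := znorm_pos hz
  have hsinh : Real.sinh (Th p) * gradSq Th p + Real.cosh (Th p) * lap3 Th p
      = Real.sinh (Th p) * (znorm p ^ 2)⁻¹ := by
    rw [← lap3_comp (Eventually.of_forall Real.hasDerivAt_sinh) (Real.hasDerivAt_cosh _)
      (contDiffAt_Th hz), sinh_comp_Th, lap3_t_mul (contDiffAt_inv_znorm hz), lap3_inv_znorm hz,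
      pdR_et_inv_znorm hz, sinh_Th]
    field_simp
    ring
  rw [gradSq_Th hz] at hsinh
  exact (mul_eq_zero_iff_left (Real.cosh_pos _).ne').1 (add_eq_left.1 hsinh)

end Geometry

section LiouvilleProfile

/-- The solution `F(x) = log (n / (2 sinh (n x)))` of the one-dimensional Liouville equation
`F'' = 4 e^{2F}`. -/
def liouvilleProfile (n x : ℝ) : ℝ := Real.log (n / (2 * Real.sinh (n * x)))

variable {n x : ℝ}

lemma hasDerivAt_sinh_const_mul :
    HasDerivAt (fun y => Real.sinh (n * y)) (n * Real.cosh (n * x)) x := by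
  simpa [mul_comm] using ((hasDerivAt_id x).const_mul n).sinh

lemma hasDerivAt_cosh_const_mul :
    HasDerivAt (fun y => Real.cosh (n * y)) (n * Real.sinh (n * x)) x := by
  simpa [mul_comm] using ((hasDerivAt_id x).const_mul n).cosh

lemma hasDerivAt_liouvilleProfile (hx : Real.sinh (n * x) ≠ 0) :
    HasDerivAt (liouvilleProfile n) (-n * (Real.cosh (n * x) / Real.sinh (n * x))) x := by
  have hn : n ≠ 0 := by rintro rfl; simp at hx
  have harg := (hasDerivAt_const x n).fun_div (hasDerivAt_sinh_const_mul.const_mul 2)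
    (mul_ne_zero two_ne_zero hx)
  refine (harg.log (by positivity)).congr_deriv ?_
  field_simp
  ring

lemma hasDerivAt_deriv_liouvilleProfile (hx : Real.sinh (n * x) ≠ 0) :
    HasDerivAt (fun y => -n * (Real.cosh (n * y) / Real.sinh (n * y)))
      (4 * Real.exp (2 * liouvilleProfile n x)) x := by
  have hn : n ≠ 0 := by rintro rfl; simp at hx
  have hexp : Real.exp (2 * liouvilleProfile n x) = (n / (2 * Real.sinh (n * x))) ^ 2 := by
    rw [liouvilleProfile, two_mul, Real.exp_add, Real.exp_log_eq_abs (by positivity),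
      abs_mul_abs_self, sq]
  refine ((hasDerivAt_cosh_const_mul.fun_div hasDerivAt_sinh_const_mul hx).const_mul
    (-n)).congr_deriv ?_
  rw [hexp]
  field_simp
  linear_combination 4 * Real.cosh_sq (n * x)

lemma exp_liouvilleProfile (hn : 0 < n) (hx : 0 < x) :
    Real.exp (liouvilleProfile n x) = n / (2 * Real.sinh (n * x)) :=
  Real.exp_log (div_pos hn (mul_pos two_pos (Real.sinh_pos_iff.2 (mul_pos hn hx))))

end LiouvilleProfile

section Model

/-- The potential `v = F(Θ) - n log |z|` of the model data set, where `F` is the Liouville profile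
and `n = m + 1`. -/
def modelPotential (n : ℝ) (q : P3) : ℝ := liouvilleProfile n (Th q) - n * Real.log (znorm q)

variable {n : ℝ} {p : P3}

lemma Th_pos (hp : p ∈ Hstar) : 0 < Th p :=
  Real.arsinh_pos_iff.2 (div_pos hp.1 (znorm_pos hp.2))

lemma sinh_mul_Th_pos (hn : 0 < n) (hp : p ∈ Hstar) : 0 < Real.sinh (n * Th p) :=
  Real.sinh_pos_iff.2 (mul_pos hn (Th_pos hp))

lemma Hstar_mem_nhds (hp : p ∈ Hstar) : Hstar ∈ 𝓝 p :=
  ((isOpen_lt continuous_const continuous_fst).inter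
    (isOpen_ne_fun continuous_snd continuous_const)).mem_nhds hp

lemma contDiffAt_log_znorm (hz : p.2 ≠ 0) : ContDiffAt ℝ 2 (fun q => Real.log (znorm q)) p :=
  (contDiffAt_znorm hz).log (znorm_pos hz).ne'

lemma contDiffAt_liouvilleProfile_Th (hz : p.2 ≠ 0) (hs : Real.sinh (n * Th p) ≠ 0) :
    ContDiffAt ℝ 2 (fun q => liouvilleProfile n (Th q)) p := by
  have hn : n ≠ 0 := by rintro rfl; simp at hs
  have hsinh : ContDiffAt ℝ 2 (fun q => 2 * Real.sinh (n * Th q)) p :=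
    contDiffAt_const.mul (contDiffAt_const.mul (contDiffAt_Th hz)).sinh
  exact (contDiffAt_const.div hsinh (mul_ne_zero two_ne_zero hs)).log
    (div_ne_zero hn (mul_ne_zero two_ne_zero hs))

lemma contDiffAt_modelPotential (hz : p.2 ≠ 0) (hs : Real.sinh (n * Th p) ≠ 0) :
    ContDiffAt ℝ 2 (modelPotential n) p :=
  (contDiffAt_liouvilleProfile_Th hz hs).sub (contDiffAt_const.mul (contDiffAt_log_znorm hz))

lemma pdR_modelPotential (hz : p.2 ≠ 0) (hs : Real.sinh (n * Th p) ≠ 0) (e : P3) :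
    pdR e (modelPotential n) p
      = -n * (Real.cosh (n * Th p) / Real.sinh (n * Th p) * pdR e Th p
        + (p.2.1 * e.2.1 + p.2.2 * e.2.2) / znorm p ^ 2) := by
  have hr := znorm_pos hz
  have hlog := (contDiffAt_log_znorm hz).differentiableAt two_ne_zero
  have hF := (contDiffAt_liouvilleProfile_Th hz hs).differentiableAt two_ne_zero
  refine (pdR_sub_const_mul hF hlog n e).trans ?_
  rw [pdR_comp (hasDerivAt_liouvilleProfile hs) (differentiableAt_Th hz),
    pdR_comp (Real.hasDerivAt_log hr.ne') (differentiableAt_znorm hz), pdR_znorm hz]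
  field_simp
  ring

lemma lap3_modelPotential (hz : p.2 ≠ 0) (hs : Real.sinh (n * Th p) ≠ 0) :
    lap3 (modelPotential n) p = 4 * Real.exp (2 * liouvilleProfile n (Th p)) / znorm p ^ 2 := by
  have hF : ∀ᶠ x in 𝓝 (Th p), HasDerivAt (liouvilleProfile n)
      (-n * (Real.cosh (n * x) / Real.sinh (n * x))) x := by
    have hcont : ContinuousAt (fun x => Real.sinh (n * x)) (Th p) := by fun_prop
    exact (hcont.eventually_ne hs).mono fun x hx => hasDerivAt_liouvilleProfile hx
  refine (lap3_sub_const_mul (contDiffAt_liouvilleProfile_Th hz hs) (contDiffAt_log_znorm hz)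
    n).trans ?_
  rw [lap3_comp hF (hasDerivAt_deriv_liouvilleProfile hs) (contDiffAt_Th hz), gradSq_Th hz,
    lap3_Th hz, lap3_log_znorm hz]
  ring

lemma normSq_zc (p : P3) : Complex.normSq (zc p) = znorm p ^ 2 := by
  rw [znorm_sq, zc, mul_comm, Complex.normSq_add_mul_I]

lemma exp_modelPotential (m : ℕ) (hz : p.2 ≠ 0) :
    Real.exp (modelPotential (m + 1) p)
      = Real.exp (liouvilleProfile (m + 1) (Th p)) / znorm p ^ (m + 1) := by
  have hpow : Real.exp ((m + 1) * Real.log (znorm p)) = znorm p ^ (m + 1) := by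
    rw [← Nat.cast_succ, Real.exp_nat_mul, Real.exp_log (znorm_pos hz)]
  rw [modelPotential, Real.exp_sub, hpow]

theorem liouville_modelPotential (m : ℕ) (hp : p ∈ Hstar) :
    lap3 (modelPotential (m + 1)) p
      = 4 * Complex.normSq (-zc p ^ m) * Real.exp (2 * modelPotential (m + 1) p) := by
  have hr := znorm_pos hp.2
  have hexp := exp_modelPotential m hp.2
  rw [lap3_modelPotential hp.2 (sinh_mul_Th_pos m.cast_add_one_pos hp).ne', Complex.normSq_neg,
    map_pow, normSq_zc, two_mul, two_mul, Real.exp_add, Real.exp_add, hexp]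
  field_simp
  ring

lemma pdR_modelPotential_of_horizontal (m : ℕ) (hp : p ∈ Hstar) {e : P3} (he : e.1 = 0) :
    pdR e (modelPotential (m + 1)) p
      = -(m + 1) * fM m p * ((p.2.1 * e.2.1 + p.2.2 * e.2.2) / znorm p ^ 2) := by
  have hs := sinh_mul_Th_pos (n := m + 1) m.cast_add_one_pos hp
  have hr := znorm_pos hp.2
  rw [pdR_modelPotential hp.2 hs.ne', pdR_Th hp.2, fM, he]
  field_simp
  ring

lemma pdR_et_modelPotential (m : ℕ) (hp : p ∈ Hstar) :
    pdR et (modelPotential (m + 1)) p = 2 * alphaM m p := by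
  have hs := sinh_mul_Th_pos (n := m + 1) m.cast_add_one_pos hp
  have hr := znorm_pos hp.2
  have ht : 0 < p.1 := hp.1
  rw [pdR_modelPotential hp.2 hs.ne', pdR_Th hp.2, alphaM, sinh_Th]
  simp only [et]
  field_simp
  ring

lemma modelA1_eq_abelianA1 (m : ℕ) (hp : p ∈ Hstar) :
    modelA1 m p = abelianA1 (modelPotential (m + 1)) p := by
  rw [modelA1, abelianA1, pdR_modelPotential_of_horizontal m hp rfl]
  congr 2
  simp only [ez2]
  ring

lemma modelA2_eq_abelianA2 (m : ℕ) (hp : p ∈ Hstar) :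
    modelA2 m p = abelianA2 (modelPotential (m + 1)) p := by
  rw [modelA2, abelianA2, pdR_modelPotential_of_horizontal m hp rfl]
  congr 2
  simp only [ez1]
  ring

lemma modela3_eq_abelianA3 (m : ℕ) (hp : p ∈ Hstar) :
    modela3 m p = abelianA3 (modelPotential (m + 1)) p := by
  rw [modela3, abelianA3, pdR_et_modelPotential m hp]
  congr 2
  ring

lemma modelPhi_eq_abelianPhi (m : ℕ) (hp : p ∈ Hstar) :
    modelPhi m p = abelianPhi (modelPotential (m + 1)) (fun z => -z ^ m) p := by
  have hr : (znorm p : ℂ) ≠ 0 := Complex.ofReal_ne_zero.2 (znorm_pos hp.2).ne'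
  have ht : (p.1 : ℂ) ≠ 0 := Complex.ofReal_ne_zero.2 hp.1.ne'
  rw [modelPhi, abelianPhi, exp_modelPotential m hp.2,
    exp_liouvilleProfile m.cast_add_one_pos (Th_pos hp), sinh_Th, sMinus, div_pow]
  congr 1
  push_cast
  field_simp
  ring

end Model

/-- Witten's model solutions (1.5) of the paper satisfy all four ℝ-invariant
Kapustin-Witten equations on `{(t,z) ∈ H : z ≠ 0}`. -/
theorem statement18 (m : ℕ) :
    ∀ p ∈ Hstar,
      KW123At (modelAt m) (modelA1 m) (modelA2 m) (modela3 m) (modelPhi m) p ∧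
      KW4At (modelAt m) (modelA1 m) (modelA2 m) (modela3 m) (modelPhi m) p := by
  intro p hp
  have hv : ContDiffAt ℝ 2 (modelPotential (m + 1)) p :=
    contDiffAt_modelPotential hp.2 (sinh_mul_Th_pos m.cast_add_one_pos hp).ne'
  have near_p {f g : P3 → M2} (hfg : ∀ q ∈ Hstar, f q = g q) : f =ᶠ[𝓝 p] g :=
    eventually_of_mem (Hstar_mem_nhds hp) hfg
  have ht : modelAt m =ᶠ[𝓝 p] 0 := near_p fun _ _ => rfl
  have h1 := near_p fun _ => modelA1_eq_abelianA1 m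
  have h2 := near_p fun _ => modelA2_eq_abelianA2 m
  have h3 := near_p fun _ => modela3_eq_abelianA3 m
  have hφ := near_p fun _ => modelPhi_eq_abelianPhi m
  rw [kw123At_congr ht h1 h2 h3 hφ, kw4At_congr ht h1 h2 h3 hφ, kw4At_abelian_iff hv]
  exact ⟨kw123At_abelian hv (by fun_prop), liouville_modelPotential m hp⟩

end
end
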